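/- arXiv:1910.07362 — 3 statements merged into one kernel-verified Lean document; each statement's English description precedes it below -/
import Mathlib

section
/- Let X and Y be Banach spaces such that X admits a bump function which is bounded, Lipschitz and everywhere Gâteaux differentiable, and Y admits a bump function which is bounded, Lipschitz and everywhere Fréchet differentiable. Let C_b^G(X) be the set of bounded Lipschitz everywhere Gâteaux differentiable functions X → ℝ and C_b^F(Y) the set of bounded Lipschitz everywhere Fréchet differentiable functions Y → ℝ. Then the following are equivalent: (1) there exists a linear bijection Φ : C_b^G(X) → C_b^F(Y) such that sup_y |Φ(f)(y)| = sup_x |f(x)| and the best Lipschitz constant of Φ(f) equals the best Lipschitz constant of f, for all f ∈ C_b^G(X); (2) X and Y are isometrically isomorphic and finite dimensional. -/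
open Filter Metric Topology

section Defs
variable {X Z : Type*} [NormedAddCommGroup X] [NormedSpace ℝ X]
  [NormedAddCommGroup Z] [NormedSpace ℝ Z]

/-- `A` is the Gâteaux derivative of `f` at `x`. -/
def HasGateauxDerivAt (f : X → Z) (A : X →L[ℝ] Z) (x : X) : Prop :=
  ∀ h : X, Tendsto (fun t : ℝ => t⁻¹ • (f (x + t • h) - f x)) (𝓝[≠] (0 : ℝ)) (𝓝 (A h))

/-- `f` is Gâteaux differentiable at `x`. -/
def GateauxDifferentiableAt (f : X → Z) (x : X) : Prop :=
  ∃ A : X →L[ℝ] Z, HasGateauxDerivAt f A x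

/-- Membership in `C_b^G(X)`: bounded, Lipschitz and everywhere Gâteaux differentiable. -/
def MemCbG (f : X → ℝ) : Prop :=
  (∃ C : ℝ, ∀ x, |f x| ≤ C) ∧ (∃ K : NNReal, LipschitzWith K f) ∧
    ∀ x, GateauxDifferentiableAt f x

/-- Membership in `C_b^F(X)`: bounded, Lipschitz and everywhere Fréchet differentiable. -/
def MemCbF (f : X → ℝ) : Prop :=
  (∃ C : ℝ, ∀ x, |f x| ≤ C) ∧ (∃ K : NNReal, LipschitzWith K f) ∧ Differentiable ℝ f
end Defs

/-- The best Lipschitz constant of `f`: the supremum of `|f x - f x'| / ‖x - x'‖` over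
all pairs (the quotient is interpreted as `0` when `x = x'`). -/
noncomputable def bestLip {X : Type*} [NormedAddCommGroup X] (f : X → ℝ) : ℝ :=
  sSup (Set.range fun p : X × X => |f p.1 - f p.2| / ‖p.1 - p.2‖)

section Helpers

theorem abs_le_of_sq_trick {a c : ℝ} (hc : 0 ≤ c) (h : ∀ ε : ℝ, 0 < ε → a ≤ ε * c) : a ≤ 0 := by
  by_contra ha
  push Not at ha
  have h2 := h (a / (2 * (c + 1))) (by positivity)
  have : a / (2 * (c + 1)) * c < a := by
    rw [div_mul_eq_mul_div, div_lt_iff₀ (by positivity)]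
    nlinarith
  linarith

theorem mult_of_order {α β : Type*} (A : Subalgebra ℝ (α → ℝ)) (B : Subalgebra ℝ (β → ℝ))
    (Φ : A ≃ₗ[ℝ] B) (hA : ∀ f : A, ∃ C : ℝ, ∀ x, |f.1 x| ≤ C) (h1 : Φ 1 = 1)
    (pos : ∀ f : A, (∀ x, 0 ≤ f.1 x) → ∀ y, 0 ≤ (Φ f).1 y)
    (pos' : ∀ g : B, (∀ x, 0 ≤ g.1 x) → ∀ y, 0 ≤ (Φ.symm g).1 y)
    (f g : A) : Φ (f * g) = Φ f * Φ g := by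
  have h1' : Φ.symm 1 = 1 := by rw [← h1, Φ.symm_apply_apply]
  -- one sided estimate
  have key : ∀ f : A, (∀ x, 0 ≤ f.1 x) → ∀ (h : B) (y : β), h.1 y = 0 →
      (Φ (f * Φ.symm h)).1 y ≤ 0 := by
    intro f hf h y hy
    obtain ⟨M, hM⟩ := hA f
    apply abs_le_of_sq_trick (pos f hf y)
    intro ε hε
    have e1 := pos' (ε • (1 : B) + (1 / (4 * ε)) • (h * h) - h) (by
      intro x
      simp only [Subalgebra.coe_sub, Subalgebra.coe_add, Subalgebra.coe_smul, Subalgebra.coe_mul,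
        Subalgebra.coe_one, Pi.sub_apply, Pi.add_apply, Pi.smul_apply, Pi.mul_apply, Pi.one_apply,
        smul_eq_mul]
      have : ε * 1 + 1 / (4 * ε) * (h.1 x * h.1 x) - h.1 x
          = (2 * ε - h.1 x) ^ 2 / (4 * ε) := by
        field_simp
        ring
      rw [this]
      positivity)
    have e2 := pos' (h * h) (by
      intro x
      exact mul_self_nonneg (h.1 x))
    have e3 := pos (ε • f + (M / (4 * ε)) • Φ.symm (h * h) - f * Φ.symm h) (by
      intro x
      have e1 := e1 x
      have e2 := e2 x
      simp only [map_sub, map_add, map_smul, h1'] at e1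
      simp only [Subalgebra.coe_sub, Subalgebra.coe_add, Subalgebra.coe_smul, Subalgebra.coe_mul,
        Subalgebra.coe_one, Pi.sub_apply, Pi.add_apply, Pi.smul_apply, Pi.mul_apply, Pi.one_apply,
        smul_eq_mul] at e1 e2 ⊢
      have hfx := hf x
      have hfM : f.1 x ≤ M := (le_abs_self _).trans (hM x)
      have a1 := mul_nonneg hfx e1
      have a2 : f.1 x * (1 / (4 * ε) * (Φ.symm (h * h)).1 x)
          ≤ M / (4 * ε) * (Φ.symm (h * h)).1 x := by
        have := mul_le_mul_of_nonneg_right hfM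
          (mul_nonneg (by positivity : 0 ≤ 1 / (4 * ε)) e2)
        calc _ ≤ _ := this
          _ = _ := by ring
      nlinarith) y
    simp only [map_sub, map_add, map_smul, LinearEquiv.apply_symm_apply] at e3
    simp only [Subalgebra.coe_sub, Subalgebra.coe_add, Subalgebra.coe_smul, Subalgebra.coe_mul,
        Pi.sub_apply, Pi.add_apply, Pi.smul_apply, Pi.mul_apply,
        smul_eq_mul, hy] at e3
    linarith
  have key2 : ∀ f : A, (∀ x, 0 ≤ f.1 x) → ∀ g : A, Φ (f * g) = Φ f * Φ g := by
    intro f hf g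
    apply Subtype.ext
    funext y
    have a := key f hf (Φ g - ((Φ g).1 y) • (1 : B)) y (by simp)
    have b := key f hf (((Φ g).1 y) • (1 : B) - Φ g) y (by simp)
    simp only [map_sub, map_smul, h1', LinearEquiv.symm_apply_apply, mul_sub,
      mul_smul_comm, mul_one] at a b
    simp only [Subalgebra.coe_sub, Subalgebra.coe_smul, Subalgebra.coe_mul,
        Pi.sub_apply, Pi.smul_apply, Pi.mul_apply, smul_eq_mul] at a b ⊢
    linarith
  obtain ⟨M, hM⟩ := hA f
  have := key2 (f + M • (1 : A)) (by
    intro x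
    have := neg_abs_le (f.1 x)
    have := hM x
    simp only [Subalgebra.coe_add, Subalgebra.coe_smul, Subalgebra.coe_one, Pi.add_apply,
      Pi.smul_apply, Pi.one_apply, smul_eq_mul]
    linarith) g
  simp only [add_mul, map_add, map_smul, h1, smul_mul_assoc, one_mul] at this
  exact add_right_cancel this

/-- `1`-Lipschitz real functions. -/
def Lip1 {X : Type*} [NormedAddCommGroup X] (f : X → ℝ) : Prop :=
  ∀ x x', |f x - f x'| ≤ ‖x - x'‖

theorem exists_rep {X Y : Type*} [NormedAddCommGroup X] [CompleteSpace X] [NormedAddCommGroup Y]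
    (A : Subalgebra ℝ (X → ℝ)) (B : Subalgebra ℝ (Y → ℝ)) (Φ : A ≃ₗ[ℝ] B)
    (hAl : ∀ f : A, ∃ K : ℝ, ∀ x x', |f.1 x - f.1 x'| ≤ K * ‖x - x'‖)
    (h1 : Φ 1 = 1)
    (pos' : ∀ g : B, (∀ x, 0 ≤ g.1 x) → ∀ y, 0 ≤ (Φ.symm g).1 y)
    (hmul : ∀ f g, Φ (f * g) = Φ f * Φ g)
    (hL : ∀ f : A, Lip1 f.1 → Lip1 (Φ f).1)
    (hsep : ∀ (x x' : X) (r : ℝ), (∀ f : A, Lip1 f.1 → |f.1 x - f.1 x'| ≤ r) → ‖x - x'‖ ≤ r)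
    (hbump : ∀ (y : Y) (ε : ℝ), 0 < ε → ∃ h : B, h ≠ 0 ∧ (∀ z, 0 ≤ h.1 z) ∧
      ∀ z, h.1 z ≠ 0 → ‖z - y‖ ≤ ε) (y : Y) : ∃ x : X, ∀ f : A, (Φ f).1 y = f.1 x := by
  have h1' : Φ.symm 1 = 1 := by rw [← h1, Φ.symm_apply_apply]
  have step : ∀ ε : ℝ, 0 < ε → ∃ x : X, ∀ f : A, Lip1 f.1 → |f.1 x - (Φ f).1 y| ≤ ε := by
    intro ε hε
    obtain ⟨h, h0, hpos, hsupp⟩ := hbump y ε hε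
    have hu := pos' h hpos
    have : ∃ x, 0 < (Φ.symm h).1 x := by
      by_contra hc
      push Not at hc
      apply h0
      have : Φ.symm h = 0 := by
        apply Subtype.ext
        funext x
        exact le_antisymm (hc x) (hu x)
      simpa using this
    obtain ⟨x, hx⟩ := this
    refine ⟨x, fun f hf => ?_⟩
    have hg := hL f hf
    have bd : ∀ z, |((Φ f).1 z - (Φ f).1 y) * h.1 z| ≤ ε * h.1 z := by
      intro z
      by_cases hz : h.1 z = 0
      · simp [hz]
      · rw [abs_mul, abs_of_nonneg (hpos z)]
        exact mul_le_mul_of_nonneg_right ((hg z y).trans (hsupp z hz)) (hpos z)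
    have es : Φ.symm (Φ f * h) = f * Φ.symm h := by
      apply Φ.injective
      rw [hmul]; simp
    have p1 := pos' (ε • h - (Φ f * h - ((Φ f).1 y) • h)) (by
      intro z
      have := (abs_le.1 (bd z)).2
      simp only [Subalgebra.coe_sub, Subalgebra.coe_smul, Subalgebra.coe_mul,
        Pi.sub_apply, Pi.smul_apply, Pi.mul_apply, smul_eq_mul]
      linarith) x
    have p2 := pos' (ε • h + (Φ f * h - ((Φ f).1 y) • h)) (by
      intro z
      have := (abs_le.1 (bd z)).1
      simp only [Subalgebra.coe_sub, Subalgebra.coe_add, Subalgebra.coe_smul, Subalgebra.coe_mul,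
        Pi.sub_apply, Pi.add_apply, Pi.smul_apply, Pi.mul_apply, smul_eq_mul]
      linarith) x
    simp only [map_sub, map_add, map_smul, es] at p1 p2
    simp only [Subalgebra.coe_sub, Subalgebra.coe_add, Subalgebra.coe_smul, Subalgebra.coe_mul,
        Pi.sub_apply, Pi.add_apply, Pi.smul_apply, Pi.mul_apply, smul_eq_mul] at p1 p2
    rw [abs_le]
    constructor
    · by_contra hc
      push Not at hc
      nlinarith
    · by_contra hc
      push Not at hc
      nlinarith
  choose u hu using fun n : ℕ => step (1 / ((n : ℝ) + 1)) (by positivity)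
  have hd : ∀ n m, ‖u n - u m‖ ≤ 1 / ((n : ℝ) + 1) + 1 / ((m : ℝ) + 1) := by
    intro n m
    apply hsep
    intro f hf
    have a := abs_le.1 (hu n f hf)
    have b := abs_le.1 (hu m f hf)
    rw [abs_le]
    constructor <;> linarith [a.1, a.2, b.1, b.2]
  have hlim0 : Tendsto (fun n : ℕ => 1 / ((n : ℝ) + 1)) atTop (𝓝 0) :=
    tendsto_one_div_add_atTop_nhds_zero_nat
  have hc : CauchySeq u := by
    refine cauchySeq_of_le_tendsto_0 (fun n : ℕ => 2 * (1 / ((n : ℝ) + 1))) ?_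
      (by simpa using hlim0.const_mul 2)
    intro n m N hn hm
    rw [dist_eq_norm]
    have a := Nat.one_div_le_one_div (α := ℝ) hn
    have b := Nat.one_div_le_one_div (α := ℝ) hm
    linarith [hd n m]
  obtain ⟨x, hx⟩ := cauchySeq_tendsto_of_complete hc
  refine ⟨x, ?_⟩
  have hLip : ∀ f : A, Lip1 f.1 → (Φ f).1 y = f.1 x := by
    intro f hf
    have t1 : Tendsto (fun n => f.1 (u n)) atTop (𝓝 (f.1 x)) := by
      rw [tendsto_iff_dist_tendsto_zero]
      refine squeeze_zero (fun _ => dist_nonneg) (fun n => ?_) (tendsto_iff_dist_tendsto_zero.1 hx)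
      rw [Real.dist_eq, dist_eq_norm]
      exact hf _ _
    have t2 : Tendsto (fun n => f.1 (u n)) atTop (𝓝 ((Φ f).1 y)) := by
      rw [tendsto_iff_dist_tendsto_zero]
      refine squeeze_zero (fun _ => dist_nonneg) (fun n => ?_) hlim0
      rw [Real.dist_eq]
      exact hu n f hf
    exact tendsto_nhds_unique t2 t1
  intro f
  obtain ⟨K, hK⟩ := hAl f
  have := hLip ((1 / (|K| + 1)) • f) (by
    intro a b
    simp only [Subalgebra.coe_smul, Pi.smul_apply, smul_eq_mul]
    rw [← mul_sub, abs_mul, abs_of_pos (by positivity), div_mul_eq_mul_div, one_mul,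
      div_le_iff₀ (by positivity)]
    have := hK a b
    nlinarith [le_abs_self K, norm_nonneg (a - b)])
  simp only [map_smul, Subalgebra.coe_smul, Pi.smul_apply, smul_eq_mul] at this
  exact mul_left_cancel₀ (by positivity) this


theorem hasGateauxDerivAt_iff {X : Type*} [NormedAddCommGroup X] [NormedSpace ℝ X]
    {f : X → ℝ} {A : X →L[ℝ] ℝ} {x : X} :
    HasGateauxDerivAt f A x ↔ ∀ h, HasLineDerivAt ℝ f (A h) x h := by
  simp only [HasGateauxDerivAt, hasLineDerivAt_iff_tendsto_slope_zero]

theorem gateaux_of_fderiv {X : Type*} [NormedAddCommGroup X] [NormedSpace ℝ X]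
    {f : X → ℝ} {x : X} (h : DifferentiableAt ℝ f x) : GateauxDifferentiableAt f x :=
  ⟨fderiv ℝ f x, hasGateauxDerivAt_iff.2 fun v => h.hasFDerivAt.hasLineDerivAt v⟩

theorem MemCbF.memCbG {X : Type*} [NormedAddCommGroup X] [NormedSpace ℝ X]
    {f : X → ℝ} (h : MemCbF f) : MemCbG f :=
  ⟨h.1, h.2.1, fun x => gateaux_of_fderiv (h.2.2 x)⟩

theorem lip_mul {X : Type*} [NormedAddCommGroup X] {f g : X → ℝ}
    (hf : ∃ C : ℝ, ∀ x, |f x| ≤ C) (hf' : ∃ K : NNReal, LipschitzWith K f)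
    (hg : ∃ C : ℝ, ∀ x, |g x| ≤ C) (hg' : ∃ K : NNReal, LipschitzWith K g) :
    (∃ C : ℝ, ∀ x, |(f * g) x| ≤ C) ∧ ∃ K : NNReal, LipschitzWith K (f * g) := by
  obtain ⟨C, hC⟩ := hf
  obtain ⟨D, hD⟩ := hg
  obtain ⟨K, hK⟩ := hf'
  obtain ⟨L, hL⟩ := hg'
  have hC0 : 0 ≤ C := (abs_nonneg _).trans (hC 0)
  have hD0 : 0 ≤ D := (abs_nonneg _).trans (hD 0)
  refine ⟨⟨C * D, fun x => ?_⟩, ⟨C.toNNReal * L + D.toNNReal * K, ?_⟩⟩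
  · rw [Pi.mul_apply, abs_mul]
    exact mul_le_mul (hC x) (hD x) (abs_nonneg _) hC0
  · refine LipschitzWith.of_dist_le_mul fun x y => ?_
    have a := hK.dist_le_mul x y
    have b := hL.dist_le_mul x y
    simp only [Real.dist_eq, NNReal.coe_add, NNReal.coe_mul, Real.coe_toNNReal _ hC0,
      Real.coe_toNNReal _ hD0, Pi.mul_apply] at a b ⊢
    have e : f x * g x - f y * g y = f x * (g x - g y) + g y * (f x - f y) := by ring
    rw [e]
    calc _ ≤ |f x * (g x - g y)| + |g y * (f x - f y)| := abs_add_le _ _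
      _ = |f x| * |g x - g y| + |g y| * |f x - f y| := by rw [abs_mul, abs_mul]
      _ ≤ C * (L * dist x y) + D * (K * dist x y) := by
        gcongr
        · exact hC x
        · exact hD y
      _ = _ := by ring

theorem lip_add {X : Type*} [NormedAddCommGroup X] {f g : X → ℝ}
    (hf : ∃ C : ℝ, ∀ x, |f x| ≤ C) (hf' : ∃ K : NNReal, LipschitzWith K f)
    (hg : ∃ C : ℝ, ∀ x, |g x| ≤ C) (hg' : ∃ K : NNReal, LipschitzWith K g) :
    (∃ C : ℝ, ∀ x, |(f + g) x| ≤ C) ∧ ∃ K : NNReal, LipschitzWith K (f + g) := by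
  obtain ⟨C, hC⟩ := hf
  obtain ⟨D, hD⟩ := hg
  obtain ⟨K, hK⟩ := hf'
  obtain ⟨L, hL⟩ := hg'
  exact ⟨⟨C + D, fun x => (abs_add_le _ _).trans (add_le_add (hC x) (hD x))⟩, ⟨K + L, hK.add hL⟩⟩

/-- The algebra of bounded Lipschitz Gateaux differentiable functions. -/
def algG (X : Type*) [NormedAddCommGroup X] [NormedSpace ℝ X] : Subalgebra ℝ (X → ℝ) where
  carrier := {f | MemCbG f}
  mul_mem' := by
    rintro f g ⟨hf, hf', hf2⟩ ⟨hg, hg', hg2⟩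
    have := lip_mul hf hf' hg hg'
    refine ⟨this.1, this.2, fun x => ?_⟩
    obtain ⟨A, hA⟩ := hf2 x
    obtain ⟨B, hB⟩ := hg2 x
    rw [hasGateauxDerivAt_iff] at hA hB
    refine ⟨f x • B + g x • A, hasGateauxDerivAt_iff.2 fun v => ?_⟩
    have := HasDerivAt.mul (hA v) (hB v)
    unfold HasLineDerivAt
    convert! this using 1
    simp
    ring
  add_mem' := by
    rintro f g ⟨hf, hf', hf2⟩ ⟨hg, hg', hg2⟩
    have := lip_add hf hf' hg hg'
    refine ⟨this.1, this.2, fun x => ?_⟩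
    obtain ⟨A, hA⟩ := hf2 x
    obtain ⟨B, hB⟩ := hg2 x
    rw [hasGateauxDerivAt_iff] at hA hB
    exact ⟨A + B, hasGateauxDerivAt_iff.2 fun v => HasDerivAt.add (hA v) (hB v)⟩
  algebraMap_mem' := fun r => MemCbF.memCbG
    ⟨⟨|r|, fun _ => le_rfl⟩, ⟨0, LipschitzWith.const r⟩, differentiable_const r⟩

/-- The algebra of bounded Lipschitz Frechet differentiable functions. -/
def algF (X : Type*) [NormedAddCommGroup X] [NormedSpace ℝ X] : Subalgebra ℝ (X → ℝ) where
  carrier := {f | MemCbF f}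
  mul_mem' := by
    rintro f g ⟨hf, hf', hf2⟩ ⟨hg, hg', hg2⟩
    have := lip_mul hf hf' hg hg'
    exact ⟨this.1, this.2, hf2.mul hg2⟩
  add_mem' := by
    rintro f g ⟨hf, hf', hf2⟩ ⟨hg, hg', hg2⟩
    have := lip_add hf hf' hg hg'
    exact ⟨this.1, this.2, hf2.add hg2⟩
  algebraMap_mem' := fun r =>
    ⟨⟨|r|, fun _ => le_rfl⟩, ⟨0, LipschitzWith.const r⟩, differentiable_const r⟩

theorem lip_bestLip {X : Type*} [NormedAddCommGroup X] {f : X → ℝ}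
    (hf : ∃ K : NNReal, LipschitzWith K f) (x y : X) : |f x - f y| ≤ bestLip f * ‖x - y‖ := by
  obtain ⟨K, hK⟩ := hf
  by_cases h : x = y
  · simp [h]
  have hp : 0 < ‖x - y‖ := norm_pos_iff.2 (sub_ne_zero.2 h)
  rw [← div_le_iff₀ hp]
  refine le_csSup ⟨K, ?_⟩ ⟨(x, y), rfl⟩
  rintro _ ⟨⟨a, b⟩, rfl⟩
  have := hK.dist_le_mul a b
  rw [Real.dist_eq, dist_eq_norm] at this
  exact div_le_of_le_mul₀ (norm_nonneg _) K.2 this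

theorem bestLip_le {X : Type*} [NormedAddCommGroup X] {f : X → ℝ} {K : ℝ} (hK0 : 0 ≤ K)
    (hf : ∀ x y, |f x - f y| ≤ K * ‖x - y‖) : bestLip f ≤ K := by
  refine csSup_le (Set.range_nonempty _) ?_
  rintro _ ⟨⟨a, b⟩, rfl⟩
  exact div_le_of_le_mul₀ (norm_nonneg _) hK0 (hf a b)

theorem lip1_iff {X : Type*} [NormedAddCommGroup X] {f : X → ℝ}
    (hf : ∃ K : NNReal, LipschitzWith K f) : Lip1 f ↔ bestLip f ≤ 1 := by
  constructor
  · intro h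
    exact bestLip_le zero_le_one (fun x y => by simpa using h x y)
  · intro h x y
    have := lip_bestLip hf x y
    nlinarith [norm_nonneg (x - y)]

theorem sep_sin {X : Type*} [NormedAddCommGroup X] [NormedSpace ℝ X] (x x' : X) (r : ℝ)
    (h : ∀ f : X → ℝ, MemCbF f → Lip1 f → |f x - f x'| ≤ r) : ‖x - x'‖ ≤ r := by
  obtain ⟨g, hg1, hg⟩ := exists_dual_vector'' ℝ (x - x')
  have key : ∀ n : ℕ, ((n : ℝ) + 1) * Real.sin ((1 / ((n : ℝ) + 1)) * ‖x - x'‖) ≤ r := by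
    intro n
    set R : ℝ := (n : ℝ) + 1 with hR
    have hRp : 0 < R := by positivity
    have hl : Lip1 (fun z => R * Real.sin ((1 / R) * g (z - x'))) := by
      intro a b
      have h1 : |Real.sin ((1 / R) * g (a - x')) - Real.sin ((1 / R) * g (b - x'))|
          ≤ |(1 / R) * g (a - x') - (1 / R) * g (b - x')| := by
        have := Real.lipschitzWith_sin.dist_le_mul ((1 / R) * g (a - x')) ((1 / R) * g (b - x'))
        simpa [Real.dist_eq] using this
      have h2 : (1 / R) * g (a - x') - (1 / R) * g (b - x') = (1 / R) * g (a - b) := by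
        simp only [map_sub]; ring
      have h3 : |g (a - b)| ≤ ‖a - b‖ := by
        have := g.le_of_opNorm_le hg1 (a - b)
        simpa using this
      rw [h2, abs_mul, abs_of_pos (by positivity : 0 < 1 / R)] at h1
      show |R * _ - R * _| ≤ _
      rw [← mul_sub, abs_mul, abs_of_pos hRp]
      calc _ ≤ R * ((1 / R) * |g (a - b)|) := by gcongr
        _ = |g (a - b)| := by field_simp
        _ ≤ _ := h3
    have := h _ ⟨⟨R, fun z => ?_⟩, ⟨1, LipschitzWith.of_dist_le_mul fun a b => ?_⟩, ?_⟩ hl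
    · simp only [sub_self, map_zero, mul_zero, Real.sin_zero, sub_zero, hg] at this
      exact (le_abs_self _).trans this
    · rw [abs_mul, abs_of_pos hRp]
      have := Real.abs_sin_le_one ((1 / R) * g (z - x'))
      nlinarith
    · have := hl a b
      simpa [Real.dist_eq, dist_eq_norm] using this
    · fun_prop
  have hlim0 : Tendsto (fun n : ℕ => 1 / ((n : ℝ) + 1)) atTop (𝓝 0) :=
    tendsto_one_div_add_atTop_nhds_zero_nat
  have hd : HasDerivAt (fun s : ℝ => Real.sin (s * ‖x - x'‖)) (‖x - x'‖) 0 := by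
    have := ((hasDerivAt_id (0 : ℝ)).mul_const ‖x - x'‖).sin
    simpa using this
  rw [hasDerivAt_iff_tendsto_slope_zero] at hd
  have h2 : Tendsto (fun n : ℕ => 1 / ((n : ℝ) + 1)) atTop (𝓝[≠] 0) :=
    tendsto_nhdsWithin_iff.2 ⟨hlim0, Eventually.of_forall fun n => by
      simp only [Set.mem_compl_iff, Set.mem_singleton_iff]
      positivity⟩
  refine le_of_tendsto (hd.comp h2) (Eventually.of_forall fun n => ?_)
  simpa using key n

theorem memCbG_comp {X Y : Type*} [NormedAddCommGroup X] [NormedSpace ℝ X]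
    [NormedAddCommGroup Y] [NormedSpace ℝ Y] {f : Y → ℝ} (hf : MemCbG f) (L : X →L[ℝ] Y) (w : Y) :
    MemCbG (fun x => f (L x + w)) := by
  obtain ⟨⟨C, hC⟩, ⟨K, hK⟩, hd⟩ := hf
  refine ⟨⟨C, fun x => hC _⟩, ⟨K * ‖L‖₊, ?_⟩, fun x => ?_⟩
  · have : LipschitzWith ‖L‖₊ (fun x => L x + w) := by
      have := L.lipschitz
      intro a b
      simpa using this a b
    exact hK.comp this
  · obtain ⟨A, hA⟩ := hd (L x + w)
    refine ⟨A.comp L, fun h => ?_⟩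
    have := hA (L h)
    refine this.congr fun t => ?_
    simp only [map_add, map_smul]
    rw [add_right_comm]

theorem memCbF_comp {X Y : Type*} [NormedAddCommGroup X] [NormedSpace ℝ X]
    [NormedAddCommGroup Y] [NormedSpace ℝ Y] {f : Y → ℝ} (hf : MemCbF f) (L : X →L[ℝ] Y) (w : Y) :
    MemCbF (fun x => f (L x + w)) := by
  have h := memCbG_comp hf.memCbG L w
  refine ⟨h.1, h.2.1, fun x => ?_⟩
  have : DifferentiableAt ℝ (fun x => L x + w) x := by fun_prop
  exact (hf.2.2 (L x + w)).comp x this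

/-- The affine rescaling used for bumps. -/
theorem exists_small_bump {X : Type*} [NormedAddCommGroup X] [NormedSpace ℝ X] (P : (X → ℝ) → Prop)
    (hP : ∀ f, P f → ∀ (L : X →L[ℝ] X) (w : X), P (fun x => f (L x + w)))
    (b : X → ℝ) (hb : ∀ x, 0 ≤ b x) (hne : b ≠ 0) (hs : Bornology.IsBounded (tsupport b))
    (hbP : P b) (y : X) (ε : ℝ) (hε : 0 < ε) :
    ∃ h : X → ℝ, P h ∧ 0 < h y ∧ (∀ z, 0 ≤ h z) ∧ ∀ z, h z ≠ 0 → ‖z - y‖ ≤ ε := by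
  obtain ⟨y0, hy0⟩ := Function.ne_iff.1 hne
  obtain ⟨R, hR⟩ := hs.subset_closedBall y0
  have hR' : ∀ z, b z ≠ 0 → ‖z - y0‖ ≤ |R| + 1 := by
    intro z hz
    have := hR (subset_tsupport b hz)
    rw [mem_closedBall, dist_eq_norm] at this
    linarith [le_abs_self R]
  set S : ℝ := |R| + 1 with hS
  have hSp : 0 < S := by positivity
  have e : ∀ z, ((S / ε) • ContinuousLinearMap.id ℝ X) z + (y0 - (S / ε) • y)
      = (S / ε) • (z - y) + y0 := by
    intro z
    simp only [smul_apply, ContinuousLinearMap.id_apply, smul_sub]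
    abel
  refine ⟨fun x => b ((S / ε) • (x - y) + y0), ?_, ?_, fun z => hb _, fun z hz => ?_⟩
  · have := hP b hbP ((S / ε) • ContinuousLinearMap.id ℝ X) (y0 - (S / ε) • y)
    simpa only [e] using this
  · simp only [sub_self, smul_zero, zero_add]
    exact lt_of_le_of_ne (hb y0) (Ne.symm hy0)
  · have := hR' _ hz
    rw [add_sub_cancel_right, norm_smul, Real.norm_of_nonneg (by positivity), div_mul_eq_mul_div,
      div_le_iff₀ hε] at this
    exact le_of_mul_le_mul_left this hSp

theorem exists_riesz_seq {Y : Type*} [NormedAddCommGroup Y] [NormedSpace ℝ Y]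
    (hinf : ¬ FiniteDimensional ℝ Y) : ∃ e : ℕ → Y, (∀ n, ‖e n‖ = 1) ∧
      ∀ m n, m < n → ∀ s : ℝ, 1 / 2 ≤ ‖e n - s • e m‖ := by
  apply exists_seq_of_forall_finset_exists (fun y : Y => ‖y‖ = 1)
    (fun x y => ∀ s : ℝ, 1 / 2 ≤ ‖y - s • x‖)
  intro S _
  let F : Submodule ℝ Y := Submodule.span ℝ (S : Set Y)
  have hFfin : FiniteDimensional ℝ F := FiniteDimensional.span_finset ℝ S
  have hFc : IsClosed (F : Set Y) := F.closed_of_finiteDimensional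
  have hF : ∃ x : Y, x ∉ F := by
    by_contra hc
    push Not at hc
    apply hinf
    have : F = ⊤ := by
      ext x
      simp [hc x]
    rw [this] at hFfin
    exact (Submodule.topEquiv (R := ℝ) (M := Y)).finiteDimensional
  obtain ⟨x, hxF, hx⟩ := riesz_lemma hFc hF (by norm_num : (1 / 2 : ℝ) < 1)
  have hx0 : x ≠ 0 := by
    rintro rfl
    exact hxF F.zero_mem
  have hxn : 0 < ‖x‖ := norm_pos_iff.2 hx0
  refine ⟨‖x‖⁻¹ • x, ?_, ?_⟩
  · rw [norm_smul, norm_inv, norm_norm, inv_mul_cancel₀ hxn.ne']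
  · intro z hz s
    have h1 := hx ((‖x‖ * s) • z) (F.smul_mem _ (Submodule.subset_span hz))
    have h2 : ‖x‖⁻¹ • x - s • z = ‖x‖⁻¹ • (x - (‖x‖ * s) • z) := by
      rw [smul_sub, smul_smul, ← mul_assoc, inv_mul_cancel₀ hxn.ne', one_mul]
    rw [h2, norm_smul, norm_inv, norm_norm, ← div_eq_inv_mul, le_div_iff₀ hxn]
    exact h1

theorem exists_not_frechet {Y : Type*} [NormedAddCommGroup Y] [NormedSpace ℝ Y]
    (hinf : ¬ FiniteDimensional ℝ Y) (b : Y → ℝ) (hb : MemCbF b) (hb0 : 0 < b 0)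
    (hs : ∀ z, b z ≠ 0 → ‖z - 0‖ ≤ 1 / 8) : ∃ f : Y → ℝ, MemCbG f ∧ ¬ MemCbF f := by
  obtain ⟨e, he, hee⟩ := exists_riesz_seq hinf
  obtain ⟨⟨C, hC⟩, ⟨K, hK⟩, hbd⟩ := hb
  let r : ℕ → ℝ := fun n => (1 / 4) ^ n
  have hr : ∀ n, 0 < r n := fun n => by positivity
  have hr1 : ∀ n, r n ≤ 1 := fun n => pow_le_one₀ (by norm_num) (by norm_num)
  have hr4 : ∀ m n, m < n → 4 * r n ≤ r m := by
    intro m n hmn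
    have h1 : r n ≤ r (m + 1) := pow_le_pow_of_le_one (by norm_num) (by norm_num) hmn
    have h2 : r (m + 1) = r m * (1 / 4) := pow_succ _ _
    linarith
  let g : ℕ → Y → ℝ := fun n z => r n * b ((r n)⁻¹ • z - e n)
  have hgs : ∀ n z, g n z ≠ 0 → ‖z - r n • e n‖ ≤ r n / 8 := by
    intro n z hz
    have h1 : b ((r n)⁻¹ • z - e n) ≠ 0 := fun h => hz (by simp [g, h])
    have h2 := hs _ h1
    have h3 : z - r n • e n = r n • ((r n)⁻¹ • z - e n) := by
      rw [smul_sub, smul_smul, mul_inv_cancel₀ (hr n).ne', one_smul]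
    rw [h3, norm_smul, Real.norm_of_nonneg (hr n).le]
    rw [sub_zero] at h2
    nlinarith [hr n]
  have hnre : ∀ n, ‖r n • e n‖ = r n := by
    intro n
    rw [norm_smul, he, mul_one, Real.norm_of_nonneg (hr n).le]
  have hlow : ∀ n z, g n z ≠ 0 → 7 / 8 * r n ≤ ‖z‖ := by
    intro n z hz
    have h1 := hgs n z hz
    have h2 := norm_sub_norm_le (r n • e n) z
    rw [norm_sub_rev] at h2
    rw [hnre] at h2
    linarith
  have hup : ∀ n z, g n z ≠ 0 → ‖z‖ ≤ 9 / 8 * r n := by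
    intro n z hz
    have h1 := hgs n z hz
    have h2 := norm_sub_norm_le z (r n • e n)
    rw [hnre] at h2
    linarith
  have hg0 : ∀ n, g n 0 = 0 := by
    intro n
    by_contra h
    have := hlow n 0 h
    rw [norm_zero] at this
    linarith [hr n]
  have hgL : ∀ n z z', |g n z - g n z'| ≤ K * ‖z - z'‖ := by
    intro n z z'
    have h1 := hK.dist_le_mul ((r n)⁻¹ • z - e n) ((r n)⁻¹ • z' - e n)
    rw [Real.dist_eq, dist_eq_norm, sub_sub_sub_cancel_right, ← smul_sub, norm_smul,
      norm_inv, Real.norm_of_nonneg (hr n).le] at h1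
    simp only [g]
    rw [← mul_sub, abs_mul, abs_of_pos (hr n)]
    calc _ ≤ r n * (K * ((r n)⁻¹ * ‖z - z'‖)) := mul_le_mul_of_nonneg_left h1 (hr n).le
      _ = _ := by
        have := (hr n).ne'
        field_simp
  -- local uniqueness
  have hloc : ∀ x : Y, ∃ n, ∀ z, (z = x ∨ ‖z - x‖ < ‖x‖ / 2) → ∀ m, m ≠ n → g m z = 0 := by
    intro x
    by_cases hx : x = 0
    · refine ⟨0, fun z hz m _ => ?_⟩
      have hz0 : z = 0 := by
        rcases hz with hz | hz
        · rw [hz, hx]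
        · rw [hx] at hz
          simp only [sub_zero, norm_zero, zero_div] at hz
          exact absurd (norm_nonneg z) (not_le.2 hz)
      rw [hz0]; exact hg0 m
    · have hxp : 0 < ‖x‖ := norm_pos_iff.2 hx
      have hb1 : ∀ z, (z = x ∨ ‖z - x‖ < ‖x‖ / 2) → ‖x‖ / 2 < ‖z‖ ∧ ‖z‖ < 3 / 2 * ‖x‖ := by
        intro z hz
        rcases hz with hz | hz
        · rw [hz]; constructor <;> linarith
        · have h1 := norm_sub_norm_le z x
          have h2 := norm_sub_norm_le x z
          rw [norm_sub_rev] at h2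
          constructor <;> linarith
      by_cases hex : ∃ n z, (z = x ∨ ‖z - x‖ < ‖x‖ / 2) ∧ g n z ≠ 0
      · obtain ⟨n, z0, hz0, hgn⟩ := hex
        refine ⟨n, fun z hz m hmn => ?_⟩
        by_contra hgm
        have a1 := hb1 z0 hz0
        have a2 := hb1 z hz
        have l1 := hlow n z0 hgn
        have u1 := hup n z0 hgn
        have l2 := hlow m z hgm
        have u2 := hup m z hgm
        rcases lt_or_gt_of_ne hmn with h | h
        · have := hr4 _ _ h
          linarith
        · have := hr4 _ _ h
          linarith
      · push Not at hex
        exact ⟨0, fun z hz m _ => hex m z hz⟩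
  have huniq : ∀ x : Y, ∃ n, ∀ m, m ≠ n → g m x = 0 := by
    intro x
    obtain ⟨n, hn⟩ := hloc x
    exact ⟨n, hn x (Or.inl rfl)⟩
  choose N hN using huniq
  let f : Y → ℝ := fun x => g (N x) x
  have hf_eq : ∀ x n, (∀ m, m ≠ n → g m x = 0) → f x = g n x := by
    intro x n hn
    by_cases h : N x = n
    · simp only [f, h]
    · simp only [f]
      rw [hn _ h, hN x n (Ne.symm h)]
  have hf0 : f 0 = 0 := hg0 _
  have hline : HasGateauxDerivAt f 0 0 := by
    intro h
    have hn : ∃ n, ∀ t : ℝ, ∀ m, m ≠ n → g m (t • h) = 0 := by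
      by_cases hex : ∃ n, ∃ t : ℝ, g n (t • h) ≠ 0
      · obtain ⟨n, t, hnt⟩ := hex
        refine ⟨n, fun s m hmn => ?_⟩
        by_contra hms
        have aux : ∀ m n, m < n → ∀ s t : ℝ, g m (s • h) ≠ 0 → g n (t • h) ≠ 0 → False := by
          intro m n hmn s t hms hnt
          have p1 := hgs m _ hms
          have p2 := hgs n _ hnt
          have q1 := hlow m _ hms
          have q2 := hup n _ hnt
          rw [norm_smul, Real.norm_eq_abs] at q1 q2
          have hs0 : s ≠ 0 := by
            rintro rfl
            rw [abs_zero, zero_mul] at q1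
            linarith [hr m]
          have hsa : 0 < |s| := abs_pos.2 hs0
          have hra := hr n
          have hrb := hr m
          -- ratio
          have hq : |t / s| * (7 / 8 * r m) ≤ 9 / 8 * r n := by
            calc |t / s| * (7 / 8 * r m) ≤ |t / s| * (|s| * ‖h‖) := by gcongr
              _ = |t| * ‖h‖ := by rw [abs_div]; field_simp
              _ ≤ _ := q2
          have h3 := hee m n hmn ((r n)⁻¹ * (t / s) * r m)
          have h4 : r n • (e n - ((r n)⁻¹ * (t / s) * r m) • e m)
              = (t / s) • (s • h - r m • e m) - (t • h - r n • e n) := by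
            simp only [smul_sub, smul_smul]
            have e1 : r n * ((r n)⁻¹ * (t / s) * r m) = t / s * r m := by field_simp
            have e2 : t / s * s = t := by field_simp
            rw [e1, e2]
            abel
          have h5 : r n * ‖e n - ((r n)⁻¹ * (t / s) * r m) • e m‖
              ≤ |t / s| * (r m / 8) + r n / 8 := by
            calc r n * ‖e n - ((r n)⁻¹ * (t / s) * r m) • e m‖
                = ‖r n • (e n - ((r n)⁻¹ * (t / s) * r m) • e m)‖ := by
                  rw [norm_smul, Real.norm_of_nonneg hra.le]
              _ ≤ ‖(t / s) • (s • h - r m • e m)‖ + ‖t • h - r n • e n‖ := by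
                  rw [h4]; exact norm_sub_le _ _
              _ ≤ _ := by
                  rw [norm_smul, Real.norm_eq_abs]
                  gcongr
          nlinarith
        rcases lt_or_gt_of_ne hmn with hh | hh
        · exact aux m n hh s t hms hnt
        · exact aux n m hh t s hnt hms
      · push Not at hex
        exact ⟨0, fun t m _ => hex m t⟩
    obtain ⟨n, hn⟩ := hn
    have hev : ∀ᶠ t : ℝ in 𝓝 0, ‖t • h‖ < 7 / 8 * r n := by
      have hc : Continuous fun t : ℝ => ‖t • h‖ := by fun_prop
      have := hc.tendsto 0
      simp only [zero_smul, norm_zero] at this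
      exact this.eventually (gt_mem_nhds (by linarith [hr n]))
    have : (fun _ : ℝ => (0 : ℝ)) =ᶠ[𝓝[≠] 0] fun t : ℝ => t⁻¹ • (f (0 + t • h) - f 0) := by
      filter_upwards [nhdsWithin_le_nhds hev] with t ht
      have : f (t • h) = 0 := by
        rw [hf_eq _ n (hn t)]
        by_contra hne
        linarith [hlow n _ hne]
      rw [zero_add, this, hf0]
      simp
    simpa using tendsto_const_nhds.congr' this
  refine ⟨f, ⟨⟨C, fun x => ?_⟩, ⟨2 * K, LipschitzWith.of_dist_le_mul fun x y => ?_⟩,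
    fun x => ?_⟩, fun hF => ?_⟩
  · simp only [f, g]
    rw [abs_mul, abs_of_pos (hr _)]
    have h1 := hC ((r (N x))⁻¹ • x - e (N x))
    nlinarith [hr1 (N x), hr (N x), abs_nonneg (b ((r (N x))⁻¹ • x - e (N x)))]
  · rw [Real.dist_eq, dist_eq_norm]
    push_cast
    have hKn : 0 ≤ (K : ℝ) * ‖x - y‖ := by positivity
    by_cases h : N x = N y
    · have := hgL (N x) x y
      simp only [f]
      rw [← h]
      linarith
    · have a1 := hgL (N x) x y
      have a2 := hgL (N y) x y
      rw [hN y _ h] at a1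
      rw [hN x _ (Ne.symm h)] at a2
      simp only [f]
      have : g (N x) x - g (N y) y = (g (N x) x - 0) + (0 - g (N y) y) := by ring
      rw [this]
      have := abs_add_le (g (N x) x - 0) (0 - g (N y) y)
      linarith
  · by_cases hx : x = 0
    · rw [hx]; exact ⟨0, hline⟩
    · have hxp : 0 < ‖x‖ := norm_pos_iff.2 hx
      obtain ⟨n, hn⟩ := hloc x
      apply gateaux_of_fderiv
      have hgd : DifferentiableAt ℝ (g n) x := by
        have : Differentiable ℝ (g n) := by
          simp only [g]
          exact (hbd.comp (by fun_prop : Differentiable ℝ fun z => (r n)⁻¹ • z - e n)).const_mul _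
        exact this x
      refine hgd.congr_of_eventuallyEq ?_
      filter_upwards [ball_mem_nhds x (half_pos hxp)] with z hz
      rw [mem_ball, dist_eq_norm] at hz
      exact hf_eq z n (hn z (Or.inr hz))
  · have hd := (hF.2.2 0).hasFDerivAt
    have hA : fderiv ℝ f 0 = 0 := by
      ext v
      have h1 := hd.hasLineDerivAt v
      have h2 := hasGateauxDerivAt_iff.1 hline v
      exact h1.unique h2
    rw [hA, hasFDerivAt_iff_isLittleO_nhds_zero] at hd
    have h1 := hd.def (half_pos hb0)
    have ht : Tendsto (fun n => r n • e n) atTop (𝓝 0) := by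
      rw [tendsto_zero_iff_norm_tendsto_zero]
      simp only [hnre]
      exact tendsto_pow_atTop_nhds_zero_of_lt_one (by norm_num) (by norm_num)
    obtain ⟨n, hn⟩ := (ht.eventually h1).exists
    have hgn : g n (r n • e n) = r n * b 0 := by
      simp only [g]
      rw [smul_smul, inv_mul_cancel₀ (hr n).ne', one_smul, sub_self]
    have hfn : f (r n • e n) = r n * b 0 := by
      rw [← hgn]
      apply hf_eq
      obtain ⟨k, hk⟩ := hloc (r n • e n)
      have hnk : n = k := by
        by_contra hne
        have := hk _ (Or.inl rfl) n hne
        rw [hgn] at this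
        exact (mul_pos (hr n) hb0).ne' this
      rw [hnk]
      rw [hnk] at hk
      exact hk _ (Or.inl rfl)
    rw [zero_add, hf0, hfn, hnre] at hn
    simp only [sub_zero, zero_apply, Real.norm_eq_abs] at hn
    rw [abs_of_pos (mul_pos (hr n) hb0)] at hn
    nlinarith [mul_pos (hr n) hb0]

theorem pos_of_sup {α β : Type*} [Nonempty α] (A : Subalgebra ℝ (α → ℝ))
    (B : Subalgebra ℝ (β → ℝ)) (Φ : A →ₗ[ℝ] B) (hA : ∀ f : A, ∃ C : ℝ, ∀ x, |f.1 x| ≤ C)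
    (hB : ∀ f : B, ∃ C : ℝ, ∀ x, |f.1 x| ≤ C) (h1 : Φ 1 = 1)
    (hsup : ∀ f : A, (⨆ y, |(Φ f).1 y|) = ⨆ x, |f.1 x|)
    (f : A) (hf : ∀ x, 0 ≤ f.1 x) (y : β) : 0 ≤ (Φ f).1 y := by
  obtain ⟨M, hM⟩ := hA f
  have h2 : (⨆ x, |(M • (1 : A) - f).1 x|) ≤ M := by
    apply ciSup_le
    intro x
    have a := hf x
    have b := (le_abs_self _).trans (hM x)
    simp only [Subalgebra.coe_sub, Subalgebra.coe_smul, Subalgebra.coe_one, Pi.sub_apply,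
      Pi.smul_apply, Pi.one_apply, smul_eq_mul, mul_one]
    rw [abs_le]
    constructor <;> linarith
  rw [← hsup] at h2
  obtain ⟨C, hC⟩ := hB (Φ (M • (1 : A) - f))
  have h3 : |(Φ (M • (1 : A) - f)).1 y| ≤ M :=
    (le_ciSup (f := fun y => |(Φ (M • (1 : A) - f)).1 y|)
      ⟨C, by rintro _ ⟨z, rfl⟩; exact hC z⟩ y).trans h2
  simp only [map_sub, map_smul, h1, Subalgebra.coe_sub, Subalgebra.coe_smul, Subalgebra.coe_one,
    Pi.sub_apply, Pi.smul_apply, Pi.one_apply, smul_eq_mul, mul_one] at h3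
  linarith [(abs_le.1 h3).2]

theorem exists_isometry {X Y : Type*} [NormedAddCommGroup X] [NormedSpace ℝ X] [CompleteSpace X]
    [NormedAddCommGroup Y] [NormedSpace ℝ Y] [CompleteSpace Y]
    (bX : X → ℝ) (hbX_nonneg : ∀ x, 0 ≤ bX x) (hbX_ne : bX ≠ 0)
    (hbX_supp : Bornology.IsBounded (tsupport bX)) (hbX_mem : MemCbG bX)
    (bY : Y → ℝ) (hbY_nonneg : ∀ y, 0 ≤ bY y) (hbY_ne : bY ≠ 0)
    (hbY_supp : Bornology.IsBounded (tsupport bY)) (hbY_mem : MemCbF bY)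
    (Φ : algG X ≃ₗ[ℝ] algF Y) (h1 : Φ 1 = 1)
    (hsup : ∀ f : algG X, (⨆ y, |(Φ f).1 y|) = ⨆ x, |f.1 x|)
    (hlip : ∀ f : algG X, bestLip (Φ f).1 = bestLip f.1) :
    ∃ τ : Y ≃ᵢ X, ∀ (f : algG X) (y : Y), (Φ f).1 y = f.1 (τ y) := by
  have h1' : Φ.symm 1 = 1 := by rw [← h1, Φ.symm_apply_apply]
  have hAb : ∀ f : algG X, ∃ C : ℝ, ∀ x, |f.1 x| ≤ C := fun f => f.2.1
  have hBb : ∀ f : algF Y, ∃ C : ℝ, ∀ x, |f.1 x| ≤ C := fun f => f.2.1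
  have hAl : ∀ f : algG X, ∃ K : ℝ, ∀ x x', |f.1 x - f.1 x'| ≤ K * ‖x - x'‖ :=
    fun f => ⟨_, lip_bestLip f.2.2.1⟩
  have hBl : ∀ f : algF Y, ∃ K : ℝ, ∀ x x', |f.1 x - f.1 x'| ≤ K * ‖x - x'‖ :=
    fun f => ⟨_, lip_bestLip f.2.2.1⟩
  have pos := pos_of_sup (algG X) (algF Y) Φ.toLinearMap hAb hBb h1 hsup
  have pos' := pos_of_sup (algF Y) (algG X) Φ.symm.toLinearMap hBb hAb h1' (fun g => by
    have := hsup (Φ.symm g)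
    rw [Φ.apply_symm_apply] at this
    exact this.symm)
  have hmul := mult_of_order (algG X) (algF Y) Φ hAb h1 pos pos'
  have hmul' : ∀ f g, Φ.symm (f * g) = Φ.symm f * Φ.symm g := by
    intro f g
    apply Φ.injective
    rw [hmul]
    simp
  have hL : ∀ f : algG X, Lip1 f.1 → Lip1 (Φ f).1 := by
    intro f hf
    rw [lip1_iff (Φ f).2.2.1, hlip]
    exact (lip1_iff f.2.2.1).1 hf
  have hL' : ∀ g : algF Y, Lip1 g.1 → Lip1 (Φ.symm g).1 := by
    intro g hg
    rw [lip1_iff (Φ.symm g).2.2.1, ← hlip, Φ.apply_symm_apply]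
    exact (lip1_iff g.2.2.1).1 hg
  have hsepX : ∀ (x x' : X) (r : ℝ),
      (∀ f : algG X, Lip1 f.1 → |f.1 x - f.1 x'| ≤ r) → ‖x - x'‖ ≤ r :=
    fun x x' r h => sep_sin x x' r fun f hf hfl => h ⟨f, hf.memCbG⟩ hfl
  have hsepY : ∀ (x x' : Y) (r : ℝ),
      (∀ f : algF Y, Lip1 f.1 → |f.1 x - f.1 x'| ≤ r) → ‖x - x'‖ ≤ r :=
    fun x x' r h => sep_sin x x' r fun f hf hfl => h ⟨f, hf⟩ hfl
  have hτ := exists_rep (algG X) (algF Y) Φ hAl h1 pos' hmul hL hsepX (fun y ε hε => by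
    obtain ⟨h, hP, hy, hn, hs⟩ := exists_small_bump MemCbF (fun f hf L w => memCbF_comp hf L w)
      bY hbY_nonneg hbY_ne hbY_supp hbY_mem y ε hε
    refine ⟨⟨h, hP⟩, fun h0 => ?_, hn, hs⟩
    have : h y = 0 := congrFun (congrArg Subtype.val h0) y
    exact hy.ne' this)
  have hσ := exists_rep (algF Y) (algG X) Φ.symm hBl h1' pos hmul' hL' hsepY (fun y ε hε => by
    obtain ⟨h, hP, hy, hn, hs⟩ := exists_small_bump MemCbG (fun f hf L w => memCbG_comp hf L w)
      bX hbX_nonneg hbX_ne hbX_supp hbX_mem y ε hε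
    refine ⟨⟨h, hP⟩, fun h0 => ?_, hn, hs⟩
    have : h y = 0 := congrFun (congrArg Subtype.val h0) y
    exact hy.ne' this)
  choose τ hτ using hτ
  choose σ hσ using hσ
  have hστ : ∀ y, σ (τ y) = y := by
    intro y
    have := hsepY (σ (τ y)) y 0 (fun g _ => by
      rw [← hσ, ← hτ, Φ.apply_symm_apply]; simp)
    exact sub_eq_zero.1 (norm_le_zero_iff.1 this)
  have hτσ : ∀ x, τ (σ x) = x := by
    intro x
    have := hsepX (τ (σ x)) x 0 (fun f _ => by
      rw [← hτ, ← hσ, Φ.symm_apply_apply]; simp)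
    exact sub_eq_zero.1 (norm_le_zero_iff.1 this)
  have hiso : ∀ y y', ‖τ y - τ y'‖ = ‖y - y'‖ := by
    intro y y'
    apply le_antisymm
    · apply hsepX
      intro f hf
      rw [← hτ, ← hτ]
      exact hL f hf y y'
    · apply hsepY
      intro g hg
      have := hL' g hg (τ y) (τ y')
      rwa [← hτ, ← hτ, Φ.apply_symm_apply] at this
  refine ⟨IsometryEquiv.mk' τ σ hτσ (Isometry.of_dist_eq fun y y' => ?_), fun f y => hτ y f⟩
  rw [dist_eq_norm, dist_eq_norm, hiso]

theorem forward_dir {X Y : Type*} [NormedAddCommGroup X] [NormedSpace ℝ X] [CompleteSpace X]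
    [NormedAddCommGroup Y] [NormedSpace ℝ Y] [CompleteSpace Y]
    (bX : X → ℝ) (hbX_nonneg : ∀ x, 0 ≤ bX x) (hbX_ne : bX ≠ 0)
    (hbX_supp : Bornology.IsBounded (tsupport bX)) (hbX_mem : MemCbG bX)
    (bY : Y → ℝ) (hbY_nonneg : ∀ y, 0 ≤ bY y) (hbY_ne : bY ≠ 0)
    (hbY_supp : Bornology.IsBounded (tsupport bY)) (hbY_mem : MemCbF bY)
    (Φ : {f : X → ℝ // MemCbG f} → {g : Y → ℝ // MemCbF g})
    (hbij : Function.Bijective Φ)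
    (hadd : ∀ f g h : {f : X → ℝ // MemCbG f}, (h : X → ℝ) = (f : X → ℝ) + (g : X → ℝ) →
        (Φ h : Y → ℝ) = (Φ f : Y → ℝ) + (Φ g : Y → ℝ))
    (hsmul : ∀ (c : ℝ) (f g : {f : X → ℝ // MemCbG f}), (g : X → ℝ) = c • (f : X → ℝ) →
        (Φ g : Y → ℝ) = c • (Φ f : Y → ℝ))
    (hsup : ∀ f : {f : X → ℝ // MemCbG f},
        (⨆ y : Y, |(Φ f : Y → ℝ) y|) = ⨆ x : X, |(f : X → ℝ) x|)
    (hlip : ∀ f : {f : X → ℝ // MemCbG f}, bestLip (Φ f : Y → ℝ) = bestLip (f : X → ℝ)) :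
    Nonempty (X ≃ₗᵢ[ℝ] Y) ∧ FiniteDimensional ℝ X ∧ FiniteDimensional ℝ Y := by
  let one : {f : X → ℝ // MemCbG f} := ⟨1, (algG X).one_mem⟩
  let c : ℝ := (Φ one).1 0
  have hconst : ∀ y, (Φ one).1 y = c := by
    intro y
    have h1 := lip_bestLip (Φ one).2.2.1 y 0
    have h2 : bestLip (one.1) ≤ 0 := bestLip_le le_rfl (fun x y => by simp [one])
    rw [hlip] at h1
    have h3 : |(Φ one).1 y - (Φ one).1 0| ≤ 0 := by
      nlinarith [norm_nonneg (y - 0)]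
    exact sub_eq_zero.1 (abs_nonpos_iff.1 h3)
  have hc : |c| = 1 := by
    have := hsup one
    simp only [hconst] at this
    simpa [one] using this
  have hc0 : c ≠ 0 := by
    intro h
    rw [h, abs_zero] at hc
    exact zero_ne_one hc
  have hcc : c * c = 1 := by
    rw [← abs_mul_abs_self, hc, one_mul]
  let Φ0 : algG X →ₗ[ℝ] algF Y :=
    { toFun := fun f => ⟨(Φ ⟨f.1, f.2⟩).1, (Φ ⟨f.1, f.2⟩).2⟩
      map_add' := fun f g => Subtype.ext (hadd _ _ _ rfl)
      map_smul' := fun a f => Subtype.ext (hsmul a _ _ rfl) }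
  have hΦ0 : Function.Bijective Φ0 := by
    constructor
    · intro f g hfg
      have h1 : Φ ⟨f.1, f.2⟩ = Φ ⟨g.1, g.2⟩ := Subtype.ext (congrArg Subtype.val hfg)
      have h2 := hbij.1 h1
      exact Subtype.ext (congrArg Subtype.val h2)
    · intro g
      obtain ⟨f, hf⟩ := hbij.2 ⟨g.1, g.2⟩
      exact ⟨⟨f.1, f.2⟩, Subtype.ext (congrArg Subtype.val hf)⟩
  let Ψ : algG X ≃ₗ[ℝ] algF Y :=
    (LinearEquiv.ofBijective Φ0 hΦ0).trans (LinearEquiv.smulOfNeZero ℝ (algF Y) c hc0)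
  have hΨ : ∀ f y, (Ψ f).1 y = c * (Φ ⟨f.1, f.2⟩).1 y := fun f y => rfl
  obtain ⟨τ, hτ⟩ := exists_isometry bX hbX_nonneg hbX_ne hbX_supp hbX_mem bY hbY_nonneg hbY_ne
    hbY_supp hbY_mem Ψ (by
      apply Subtype.ext
      funext y
      rw [hΨ]
      have := hconst y
      show c * (Φ one).1 y = 1
      rw [this, hcc]) (by
      intro f
      simp only [hΨ, abs_mul, hc, one_mul]
      exact hsup ⟨f.1, f.2⟩) (by
      intro f
      rw [← hlip ⟨f.1, f.2⟩]
      unfold bestLip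
      simp only [hΨ, ← mul_sub, abs_mul, hc, one_mul])
  let T : X ≃ₗᵢ[ℝ] Y := τ.symm.toRealLinearIsometryEquiv
  have hT : ∀ x, τ.symm x = T x + τ.symm 0 := by
    intro x
    simp [T]
  have hYfin : FiniteDimensional ℝ Y := by
    by_contra hinf
    obtain ⟨h, hP, hy, hn, hs⟩ := exists_small_bump MemCbF (fun f hf L w => memCbF_comp hf L w)
      bY hbY_nonneg hbY_ne hbY_supp hbY_mem 0 (1 / 8) (by norm_num)
    obtain ⟨f, hfG, hfF⟩ := exists_not_frechet hinf h hP hy hs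
    apply hfF
    have hG := memCbG_comp hfG (T.toContinuousLinearEquiv : X →L[ℝ] Y) (τ.symm 0)
    have hF := (Ψ ⟨_, hG⟩).2
    have : (Ψ ⟨_, hG⟩).1 = f := by
      funext y
      rw [hτ]
      show f (T (τ y) + τ.symm 0) = f y
      rw [← hT, τ.symm_apply_apply]
    rw [this] at hF
    exact hF
  exact ⟨⟨T⟩, T.symm.toLinearEquiv.finiteDimensional, hYfin⟩

theorem MemCbG.memCbF {X : Type*} [NormedAddCommGroup X] [NormedSpace ℝ X]
    [FiniteDimensional ℝ X] {f : X → ℝ} (h : MemCbG f) : MemCbF f := by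
  obtain ⟨hb, ⟨K, hK⟩, hd⟩ := h
  refine ⟨hb, ⟨K, hK⟩, fun x => ?_⟩
  obtain ⟨A, hA⟩ := hd x
  rw [hasGateauxDerivAt_iff] at hA
  exact (hK.hasFDerivAt_of_hasLineDerivAt_of_closure (s := Set.univ) (by simp)
    (fun v _ => hA v)).differentiableAt

theorem backward_dir {X Y : Type*} [NormedAddCommGroup X] [NormedSpace ℝ X]
    [NormedAddCommGroup Y] [NormedSpace ℝ Y] (e : X ≃ₗᵢ[ℝ] Y)
    [FiniteDimensional ℝ X] [FiniteDimensional ℝ Y] :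
    ∃ Φ : {f : X → ℝ // MemCbG f} → {g : Y → ℝ // MemCbF g},
      Function.Bijective Φ ∧
      (∀ f g h : {f : X → ℝ // MemCbG f}, (h : X → ℝ) = (f : X → ℝ) + (g : X → ℝ) →
        (Φ h : Y → ℝ) = (Φ f : Y → ℝ) + (Φ g : Y → ℝ)) ∧
      (∀ (c : ℝ) (f g : {f : X → ℝ // MemCbG f}), (g : X → ℝ) = c • (f : X → ℝ) →
        (Φ g : Y → ℝ) = c • (Φ f : Y → ℝ)) ∧
      (∀ f : {f : X → ℝ // MemCbG f},
        (⨆ y : Y, |(Φ f : Y → ℝ) y|) = ⨆ x : X, |(f : X → ℝ) x|) ∧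
      (∀ f : {f : X → ℝ // MemCbG f}, bestLip (Φ f : Y → ℝ) = bestLip (f : X → ℝ)) := by
  have hmem : ∀ f : X → ℝ, MemCbG f → MemCbF (fun y => f (e.symm y)) := by
    intro f hf
    have := memCbG_comp hf (e.symm.toContinuousLinearEquiv : Y →L[ℝ] X) 0
    simp only [add_zero] at this
    exact MemCbG.memCbF this
  have hmem' : ∀ g : Y → ℝ, MemCbF g → MemCbG (fun x => g (e x)) := by
    intro g hg
    have := memCbG_comp hg.memCbG (e.toContinuousLinearEquiv : X →L[ℝ] Y) 0
    simp only [add_zero] at this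
    exact this
  refine ⟨fun f => ⟨fun y => f.1 (e.symm y), hmem f.1 f.2⟩, ⟨?_, ?_⟩, ?_, ?_, ?_, ?_⟩
  · intro f g h
    apply Subtype.ext
    funext x
    have := congrFun (congrArg Subtype.val h) (e x)
    simpa using this
  · intro g
    refine ⟨⟨fun x => g.1 (e x), hmem' g.1 g.2⟩, Subtype.ext ?_⟩
    funext y
    simp
  · intro f g h hh
    funext y
    simp [hh]
  · intro c f g hh
    funext y
    simp [hh]
  · intro f
    exact e.symm.toEquiv.iSup_congr fun _ => rfl
  · intro f
    unfold bestLip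
    congr 1
    have hs : Function.Surjective (fun p : Y × Y => (e.symm p.1, e.symm p.2)) :=
      e.symm.surjective.prodMap e.symm.surjective
    rw [← hs.range_comp]
    congr 1
    funext p
    simp only [Function.comp]
    rw [← map_sub, e.symm.norm_map]

end Helpers

/-- **a Banach–Stone-like theorem.** Let `X` and `Y` be Banach spaces such
that `X` admits a bump function which is bounded, Lipschitz and everywhere Gâteaux
differentiable, and `Y` admits a bump function which is bounded, Lipschitz and everywhere
Fréchet differentiable. Then there is a linear bijection `Φ : C_b^G(X) → C_b^F(Y)`
preserving the sup norm and the best Lipschitz constant if and only if `X` and `Y` are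
isometrically isomorphic and finite dimensional. -/
theorem banach_stone_like
    {X Y : Type*} [NormedAddCommGroup X] [NormedSpace ℝ X] [CompleteSpace X]
    [NormedAddCommGroup Y] [NormedSpace ℝ Y] [CompleteSpace Y]
    (bX : X → ℝ) (hbX_nonneg : ∀ x, 0 ≤ bX x) (hbX_ne : bX ≠ 0)
    (hbX_supp : Bornology.IsBounded (tsupport bX)) (hbX_mem : MemCbG bX)
    (bY : Y → ℝ) (hbY_nonneg : ∀ y, 0 ≤ bY y) (hbY_ne : bY ≠ 0)
    (hbY_supp : Bornology.IsBounded (tsupport bY)) (hbY_mem : MemCbF bY) :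
    (∃ Φ : {f : X → ℝ // MemCbG f} → {g : Y → ℝ // MemCbF g},
      Function.Bijective Φ ∧
      (∀ f g h : {f : X → ℝ // MemCbG f}, (h : X → ℝ) = (f : X → ℝ) + (g : X → ℝ) →
        (Φ h : Y → ℝ) = (Φ f : Y → ℝ) + (Φ g : Y → ℝ)) ∧
      (∀ (c : ℝ) (f g : {f : X → ℝ // MemCbG f}), (g : X → ℝ) = c • (f : X → ℝ) →
        (Φ g : Y → ℝ) = c • (Φ f : Y → ℝ)) ∧
      (∀ f : {f : X → ℝ // MemCbG f},
        (⨆ y : Y, |(Φ f : Y → ℝ) y|) = ⨆ x : X, |(f : X → ℝ) x|) ∧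
      (∀ f : {f : X → ℝ // MemCbG f}, bestLip (Φ f : Y → ℝ) = bestLip (f : X → ℝ))) ↔
    (Nonempty (X ≃ₗᵢ[ℝ] Y) ∧ FiniteDimensional ℝ X ∧ FiniteDimensional ℝ Y) := by
  constructor
  · rintro ⟨Φ, hbij, hadd, hsmul, hsup, hlip⟩
    exact forward_dir bX hbX_nonneg hbX_ne hbX_supp hbX_mem bY hbY_nonneg hbY_ne hbY_supp hbY_mem
      Φ hbij hadd hsmul hsup hlip
  · rintro ⟨⟨e⟩, hX, hY⟩
    exact backward_dir e
end

section
/- Let X, Y be Banach spaces and T : Y → X a bounded linear operator. Then the following are equivalent: (1) T is a compact operator with dense range; (2) for every bounded Lipschitz everywhere Gâteaux differentiable function f : X → ℝ, the composition f ∘ T is bounded, Lipschitz, and everywhere Fréchet differentiable, and moreover the map f ↦ f ∘ T is injective on the set of bounded Lipschitz everywhere Gâteaux differentiable functions on X. -/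
open Filter Metric Topology

section Helpers
variable {X Y : Type*} [NormedAddCommGroup X] [NormedSpace ℝ X]
  [NormedAddCommGroup Y] [NormedSpace ℝ Y]

/-- Fréchet differentiability implies Gâteaux differentiability. -/
lemma gateaux_of_differentiableAt {f : X → ℝ} {x : X} (hf : DifferentiableAt ℝ f x) :
    GateauxDifferentiableAt f x := by
  refine ⟨fderiv ℝ f x, fun h => ?_⟩
  have h1 := hf.hasFDerivAt.hasLineDerivAt h
  have h2 := hasDerivAt_iff_tendsto_slope_zero.1 h1
  simpa using h2

/-- Lipschitz + Gâteaux composed with a compact operator is Fréchet. -/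
lemma differentiable_comp_of_compact (T : Y →L[ℝ] X)
    (hT : TotallyBounded (⇑T '' closedBall 0 1)) {f : X → ℝ} {K : NNReal}
    (hK : LipschitzWith K f) (hf : ∀ x, GateauxDifferentiableAt f x) :
    Differentiable ℝ (f ∘ T) := by
  intro y
  obtain ⟨A, hA⟩ := hf (T y)
  refine HasFDerivAt.differentiableAt (f' := A.comp T) ?_
  rw [hasFDerivAt_iff_isLittleO_nhds_zero, Asymptotics.isLittleO_iff]
  intro ε hε
  set η : ℝ := ε / (2 * (K + ‖A‖ + 1)) with hη
  have hpos : 0 < (K : ℝ) + ‖A‖ + 1 := by positivity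
  have hη0 : 0 < η := by positivity
  have hηm : (K + ‖A‖) * η ≤ ε / 2 := by
    have : (K + ‖A‖ + 1) * η = ε / 2 := by rw [hη]; field_simp
    nlinarith
  obtain ⟨c, hcf, hc⟩ := Metric.totallyBounded_iff.1 hT η hη0
  have hev : ∀ᶠ t in 𝓝[≠] (0 : ℝ), ∀ u ∈ c,
      |t⁻¹ * (f (T y + t • u) - f (T y)) - A u| < ε / 2 := by
    rw [eventually_all_finite hcf]
    intro u _
    have := (Metric.tendsto_nhds.1 (hA u)) (ε / 2) (by positivity)
    simpa [Real.dist_eq] using this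
  rw [eventually_nhdsWithin_iff, Metric.eventually_nhds_iff] at hev
  obtain ⟨r, hr, hev⟩ := hev
  refine Metric.eventually_nhds_iff.2 ⟨r, hr, fun k hk => ?_⟩
  rcases eq_or_ne k 0 with rfl | hk0
  · simp
  have ht : 0 < ‖k‖ := norm_pos_iff.2 hk0
  set t := ‖k‖ with htdef
  have hu : T (t⁻¹ • k) ∈ ⇑T '' closedBall 0 1 := by
    refine ⟨_, ?_, rfl⟩
    rw [mem_closedBall_zero_iff, norm_smul, norm_inv, norm_norm]
    rw [inv_mul_cancel₀ ht.ne']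
  set u := T (t⁻¹ • k) with hudef
  have hTk : T k = t • u := by
    rw [hudef, ← map_smul, smul_smul, mul_inv_cancel₀ ht.ne', one_smul]
  obtain ⟨v, hv, huv⟩ := Set.mem_iUnion₂.1 (hc hu)
  have h1 := hev (y := t) (by simpa [htdef] using hk) ht.ne' v hv
  have h2 : |f (T y + t • v) - f (T y) - t * A v| ≤ ε / 2 * t := by
    have : f (T y + t • v) - f (T y) - t * A v
        = t * (t⁻¹ * (f (T y + t • v) - f (T y)) - A v) := by
      field_simp
    rw [this, abs_mul, abs_of_pos ht, mul_comm]
    gcongr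
  have huv' : ‖u - v‖ ≤ η := by
    rw [← dist_eq_norm]; exact (mem_ball.1 huv).le
  have h3 : |f (T y + t • u) - f (T y + t • v)| ≤ K * (t * η) := by
    have := hK.dist_le_mul (T y + t • u) (T y + t • v)
    rw [Real.dist_eq, dist_eq_norm, add_sub_add_left_eq_sub, ← smul_sub, norm_smul,
      Real.norm_of_nonneg ht.le] at this
    exact this.trans (by gcongr)
  have h4 : |t * A v - t * A u| ≤ ‖A‖ * η * t := by
    rw [← mul_sub, abs_mul, abs_of_pos ht, ← map_sub, mul_comm]
    gcongr
    have := A.le_opNorm (v - u)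
    rw [norm_sub_rev] at this
    exact this.trans (by gcongr)
  have h5 : (f ∘ T) (y + k) - (f ∘ T) y - (A.comp T) k
      = (f (T y + t • v) - f (T y) - t * A v) + (f (T y + t • u) - f (T y + t • v))
        + (t * A v - t * A u) := by
    simp only [Function.comp_apply, map_add, hTk, ContinuousLinearMap.comp_apply, map_smul,
      smul_eq_mul]
    ring
  rw [h5, Real.norm_eq_abs]
  have h6 := abs_add_three (f (T y + t • v) - f (T y) - t * A v)
    (f (T y + t • u) - f (T y + t • v)) (t * A v - t * A u)
  nlinarith

/-- One step of the construction of the biorthogonal-like sequence. -/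
lemma noncompact_step (T : Y →L[ℝ] X) {ε : ℝ} (hε : 0 < ε)
    (hT : ¬ ∃ t : Set X, t.Finite ∧ ⇑T '' closedBall 0 1 ⊆ ⋃ y ∈ t, ball y ε)
    (F : Finset (X →L[ℝ] ℝ)) :
    ∃ (y : Y) (φ : X →L[ℝ] ℝ), ‖φ‖ ≤ 1 ∧ ‖y‖ ≤ 2 / ε ∧ φ (T y) = 1 ∧
      ∀ ψ ∈ F, |ψ (T y)| ≤ 1 / 8 := by
  have key : ∃ y ∈ closedBall (0 : Y) 1, ∃ y' ∈ closedBall (0 : Y) 1,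
      (∀ ψ ∈ F, |ψ (T (y - y'))| ≤ ε / 8) ∧ ε ≤ ‖T (y - y')‖ := by
    by_contra hcon
    push Not at hcon
    apply hT
    let Φ : Y →L[ℝ] (F → ℝ) := ContinuousLinearMap.pi fun ψ => ψ.1.comp T
    have hb : Bornology.IsBounded (Φ '' closedBall 0 1) :=
      (Metric.isBounded_closedBall).image Φ
    have htb : TotallyBounded (Φ '' closedBall 0 1) := hb.isCompact_closure.totallyBounded.subset subset_closure
    obtain ⟨t, hts, htf, hcov⟩ := Metric.finite_approx_of_totallyBounded htb (ε / 8)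
      (by positivity)
    have hts' : ∀ p, p ∈ t → ∃ z, z ∈ closedBall (0 : Y) 1 ∧ Φ z = p := fun p hp => hts hp
    choose! g hg1 hg2 using hts'
    refine ⟨(fun p => T (g p)) '' t, htf.image _, ?_⟩
    rintro _ ⟨y, hy, rfl⟩
    obtain ⟨p, hp, hyp⟩ := Set.mem_iUnion₂.1 (hcov ⟨y, hy, rfl⟩)
    refine Set.mem_iUnion₂.2 ⟨T (g p), ⟨p, hp, rfl⟩, ?_⟩
    rw [mem_ball, dist_eq_norm, ← map_sub]
    refine hcon y hy (g p) (hg1 p hp) fun ψ hψ => ?_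
    have h1 : dist (Φ y ⟨ψ, hψ⟩) (p ⟨ψ, hψ⟩) ≤ ε / 8 :=
      (dist_le_pi_dist _ _ _).trans (mem_ball.1 hyp).le
    rw [← hg2 p hp, Real.dist_eq] at h1
    simpa [Φ] using h1
  obtain ⟨y, hy, y', hy', hF, hn⟩ := key
  set w := y - y' with hw
  have hwn : ‖w‖ ≤ 2 := by
    have := norm_sub_le y y'
    rw [mem_closedBall_zero_iff] at hy hy'
    linarith
  have hn0 : 0 < ‖T w‖ := hε.trans_le hn
  obtain ⟨φ, hφ, hφw⟩ := exists_dual_vector'' ℝ (T w)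
  refine ⟨‖T w‖⁻¹ • w, φ, hφ, ?_, ?_, ?_⟩
  · rw [norm_smul, norm_inv, norm_norm, inv_mul_eq_div]
    gcongr
  · rw [map_smul, map_smul, hφw]
    simp [hn0.ne']
  · intro ψ hψ
    rw [map_smul, map_smul, smul_eq_mul, abs_mul, abs_inv, abs_norm, inv_mul_eq_div,
      div_le_iff₀ hn0]
    have := hF ψ hψ
    linarith

lemma noncompact_seq (T : Y →L[ℝ] X) (hT : ¬ TotallyBounded (⇑T '' closedBall 0 1)) :
    ∃ (C : ℝ) (y : ℕ → Y) (φ : ℕ → X →L[ℝ] ℝ), 0 < C ∧ (∀ n, ‖φ n‖ ≤ 1) ∧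
      (∀ n, ‖y n‖ ≤ C) ∧ (∀ n, φ n (T (y n)) = 1) ∧
      ∀ j n, j < n → |φ j (T (y n))| ≤ 1 / 8 := by
  classical
  rw [Metric.totallyBounded_iff] at hT
  push Not at hT
  obtain ⟨ε, hε, hT⟩ := hT
  have hT' : ¬ ∃ t : Set X, t.Finite ∧ ⇑T '' closedBall 0 1 ⊆ ⋃ y ∈ t, ball y ε := by
    rintro ⟨t, h1, h2⟩
    exact hT t h1 h2
  obtain ⟨f, hf1, hf2⟩ := exists_seq_of_forall_finset_exists
    (fun p : Y × (X →L[ℝ] ℝ) => ‖p.2‖ ≤ 1 ∧ ‖p.1‖ ≤ 2 / ε ∧ p.2 (T p.1) = 1)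
    (fun p q => |p.2 (T q.1)| ≤ 1 / 8) (by
      intro s _
      obtain ⟨y, φ, h1, h2, h3, h4⟩ := noncompact_step T hε hT' (s.image Prod.snd)
      exact ⟨(y, φ), ⟨h1, h2, h3⟩, fun x hx => h4 _ (Finset.mem_image_of_mem _ hx)⟩)
  exact ⟨2 / ε, fun n => (f n).1, fun n => (f n).2, by positivity, fun n => (hf1 n).1,
    fun n => (hf1 n).2.1, fun n => (hf1 n).2.2, hf2⟩

/-- A smooth substitute for `max_{j<n} |φ j|`. -/
lemma smooth_max (φ : ℕ → X →L[ℝ] ℝ) (hφ : ∀ n, ‖φ n‖ ≤ 1) (n : ℕ) :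
    ∃ m : X → ℝ, Differentiable ℝ m ∧ LipschitzWith 1 m ∧ (∀ x, 0 ≤ m x) ∧
      (∀ x, ∀ j < n, |φ j x| ≤ m x) ∧
      ∀ x, (∀ j < n, |φ j x| ≤ 1 / 8) → m x ≤ 1 / 4 := by
  set l : ℝ := 8 * Real.log (2 + 2 * n) with hl
  have hl0 : 0 < l := by
    have : 0 < Real.log (2 + 2 * n) := Real.log_pos (by have : (0:ℝ) ≤ n := by positivity
                                                        linarith)
    positivity
  let S : X → ℝ := fun x => 1 + ∑ j ∈ Finset.range n,
    (Real.exp (l * φ j x) + Real.exp (-(l * φ j x)))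
  have hS1 : ∀ x, 1 ≤ S x := fun x => by
    have : 0 ≤ ∑ j ∈ Finset.range n, (Real.exp (l * φ j x) + Real.exp (-(l * φ j x))) :=
      Finset.sum_nonneg fun _ _ => by positivity
    simp only [S]; linarith
  have hS0 : ∀ x, 0 < S x := fun x => one_pos.trans_le (hS1 x)
  have hSd : Differentiable ℝ S := by
    simp only [S]
    fun_prop
  refine ⟨fun x => l⁻¹ * Real.log (S x), ?_, ?_, ?_, ?_, ?_⟩
  · exact (hSd.log fun x => (hS0 x).ne').const_mul _
  · refine LipschitzWith.of_le_add_mul 1 fun x y => ?_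
    have hd : ∀ j, |l * φ j x - l * φ j y| ≤ l * dist x y := fun j => by
      rw [← mul_sub, abs_mul, abs_of_pos hl0, ← map_sub, dist_eq_norm]
      gcongr
      have := (φ j).le_opNorm (x - y)
      rw [Real.norm_eq_abs] at this
      nlinarith [hφ j, norm_nonneg (x - y)]
    have hS : S x ≤ Real.exp (l * dist x y) * S y := by
      simp only [S, mul_add, mul_one, Finset.mul_sum, ← Real.exp_add]
      gcongr with j hj
      · exact Real.one_le_exp (by positivity)
      · have := (abs_le.1 (hd j)).2; linarith
      · have := (abs_le.1 (hd j)).1; linarith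
    have := Real.log_le_log (hS0 x) hS
    rw [Real.log_mul (Real.exp_pos _).ne' (hS0 y).ne', Real.log_exp] at this
    have h2 := mul_le_mul_of_nonneg_left this (inv_pos.2 hl0).le
    rw [mul_add, ← mul_assoc, inv_mul_cancel₀ hl0.ne'] at h2
    simp only [NNReal.coe_one]
    linarith
  · intro x
    have := Real.log_nonneg (hS1 x)
    positivity
  · intro x j hj
    show |φ j x| ≤ l⁻¹ * Real.log (S x)
    rw [← div_eq_inv_mul, le_div_iff₀ hl0]
    have hle : Real.exp (l * φ j x) + Real.exp (-(l * φ j x)) ≤ S x := by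
      have := Finset.single_le_sum
        (f := fun j => Real.exp (l * φ j x) + Real.exp (-(l * φ j x)))
        (fun i _ => by positivity) (Finset.mem_range.2 hj)
      simp only [S]; linarith
    rw [Real.le_log_iff_exp_le (hS0 x)]
    refine le_trans ?_ hle
    have e1 := Real.exp_pos (l * φ j x)
    have e2 := Real.exp_pos (-(l * φ j x))
    rcases abs_cases (φ j x) with ⟨h, _⟩ | ⟨h, _⟩
    · rw [h, mul_comm]; linarith
    · rw [h, neg_mul, mul_comm]; linarith
  · intro x hx
    show l⁻¹ * Real.log (S x) ≤ 1 / 4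
    have hle : S x ≤ (2 + 2 * n) * Real.exp (l / 8) := by
      have h1 : ∀ j ∈ Finset.range n, Real.exp (l * φ j x) + Real.exp (-(l * φ j x))
          ≤ 2 * Real.exp (l / 8) := by
        intro j hj
        have := abs_le.1 (hx j (Finset.mem_range.1 hj))
        have e1 : Real.exp (l * φ j x) ≤ Real.exp (l / 8) :=
          Real.exp_le_exp.2 (by nlinarith)
        have e2 : Real.exp (-(l * φ j x)) ≤ Real.exp (l / 8) :=
          Real.exp_le_exp.2 (by nlinarith)
        linarith
      have h2 := Finset.sum_le_sum h1
      rw [Finset.sum_const, Finset.card_range, nsmul_eq_mul] at h2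
      have h3 : 1 ≤ Real.exp (l / 8) := Real.one_le_exp (by positivity)
      simp only [S]
      nlinarith
    have h4 := Real.log_le_log (hS0 x) hle
    rw [Real.log_mul (by positivity) (Real.exp_pos _).ne', Real.log_exp] at h4
    rw [← div_eq_inv_mul, div_le_iff₀ hl0]
    linarith

/-- The bumps at scale one. -/
lemma bumps (φ : ℕ → X →L[ℝ] ℝ) (hφ : ∀ n, ‖φ n‖ ≤ 1) :
    ∃ (K : NNReal) (B : ℕ → X → ℝ), (∀ n, Differentiable ℝ (B n)) ∧
      (∀ n, LipschitzWith K (B n)) ∧ (∀ n x, 0 ≤ B n x) ∧ (∀ n x, B n x ≤ 1) ∧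
      (∀ n x, B n x ≠ 0 → 2 / 3 < φ n x ∧ ∀ j < n, |φ j x| < 1 / 3) ∧
      ∀ n x, φ n x = 1 → (∀ j < n, |φ j x| ≤ 1 / 8) → B n x = 1 := by
  choose m hm1 hm2 hm3 hm4 hm5 using smooth_max φ hφ
  let χ : ContDiffBump ((1, 0) : ℝ × ℝ) := ⟨1 / 4, 1 / 3, by norm_num, by norm_num⟩
  have hχd : ContDiff ℝ 1 χ := χ.contDiff
  obtain ⟨K, hK⟩ := hχd.lipschitzWith_of_hasCompactSupport χ.hasCompactSupport one_ne_zero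
  refine ⟨K, fun n x => χ (φ n x, m n x), ?_, ?_, ?_, ?_, ?_, ?_⟩
  · intro n
    exact (hχd.differentiable one_ne_zero).comp ((φ n).differentiable.prodMk (hm1 n))
  · intro n
    have h1 : LipschitzWith 1 (φ n) := (φ n).lipschitz.weaken (by exact_mod_cast hφ n)
    have := hK.comp (h1.prodMk (hm2 n))
    simpa [Function.comp_def] using this
  · intro n x; exact χ.nonneg
  · intro n x; exact χ.le_one
  · intro n x hx
    have hx' : (φ n x, m n x) ∈ Function.support χ := hx
    rw [χ.support_eq, mem_ball, Prod.dist_eq, max_lt_iff, Real.dist_eq, Real.dist_eq] at hx'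
    obtain ⟨h1, h2⟩ := hx'
    simp only [χ] at h1 h2
    rw [abs_lt] at h1 h2
    refine ⟨by linarith, fun j hj => ?_⟩
    have := hm4 n x j hj
    linarith
  · intro n x h1 h2
    apply χ.one_of_mem_closedBall
    rw [mem_closedBall, Prod.dist_eq, max_le_iff, Real.dist_eq, Real.dist_eq]
    have h3 := hm3 n x
    have h4 := hm5 n x h2
    simp only [χ, h1]
    refine ⟨by norm_num, ?_⟩
    rw [sub_zero, abs_of_nonneg h3]; exact h4

/-- Gluing of the bumps. -/
lemma exists_bad_function (φ : ℕ → X →L[ℝ] ℝ) (hφ : ∀ n, ‖φ n‖ ≤ 1) :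
    ∃ (f : X → ℝ) (t : ℕ → ℝ), MemCbG f ∧ (∀ n, 0 < t n) ∧ Tendsto t atTop (𝓝 0) ∧
      f 0 = 0 ∧ (∀ h, ∀ᶠ s in 𝓝 (0 : ℝ), f (s • h) = 0) ∧
      ∀ n x, φ n x = 1 → (∀ j < n, |φ j x| ≤ 1 / 8) → t n ≤ f (t n • x) := by
  obtain ⟨K, B, hBd, hBK, hB0, hB1, hBs, hBe⟩ := bumps φ hφ
  let t : ℕ → ℝ := fun n => (1 / 2) ^ n
  have ht0 : ∀ n, 0 < t n := fun n => by simp only [t]; positivity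
  have hta : ∀ i j, i ≤ j → t j ≤ t i := fun i j hij =>
    pow_le_pow_of_le_one (by norm_num) (by norm_num) hij
  have htt : Tendsto t atTop (𝓝 0) :=
    tendsto_pow_atTop_nhds_zero_of_lt_one (by norm_num) (by norm_num)
  let b : ℕ → X → ℝ := fun n x => t n * B n ((t n)⁻¹ • x)
  have hb0 : ∀ n x, 0 ≤ b n x := fun n x => mul_nonneg (ht0 n).le (hB0 _ _)
  have hb1 : ∀ n x, b n x ≤ 1 := fun n x => by
    have h1 : t n ≤ 1 := by simpa [t] using hta 0 n (Nat.zero_le n)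
    exact mul_le_one₀ h1 (hB0 _ _) (hB1 _ _)
  have hbd : ∀ n, Differentiable ℝ (b n) := fun n =>
    ((hBd n).comp (differentiable_id.const_smul _)).const_mul _
  have hbK : ∀ n x y, b n x ≤ b n y + K * dist x y := by
    intro n x y
    have h1 := (hBK n).le_add_mul ((t n)⁻¹ • x) ((t n)⁻¹ • y)
    rw [dist_smul₀, norm_inv, Real.norm_of_nonneg (ht0 n).le] at h1
    have h2 := mul_le_mul_of_nonneg_left h1 (ht0 n).le
    have h3 : t n * (B n ((t n)⁻¹ • y) + K * ((t n)⁻¹ * dist x y)) = b n y + K * dist x y := by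
      have := (ht0 n).ne'
      simp only [b]; field_simp
    rw [h3] at h2
    exact h2
  have hbs : ∀ n x, b n x ≠ 0 → 2 / 3 * t n < φ n x ∧ ∀ j < n, |φ j x| < 1 / 3 * t n := by
    intro n x hx
    obtain ⟨h1, h2⟩ := hBs n _ (right_ne_zero_of_mul hx)
    have ht := ht0 n
    constructor
    · rw [map_smul, smul_eq_mul, inv_mul_eq_div, lt_div_iff₀ ht] at h1
      exact h1
    · intro j hj
      have := h2 j hj
      rw [map_smul, smul_eq_mul, inv_mul_eq_div, abs_div, abs_of_pos ht, div_lt_iff₀ ht] at this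
      exact this
  have hdis' : ∀ n m x, n < m → b n x ≠ 0 → b m x ≠ 0 → False := by
    intro n m x hnm hn hm
    have h1 := (hbs n x hn).1
    have h2 := (hbs m x hm).2 n hnm
    have h3 := hta n m hnm.le
    have := le_abs_self (φ n x)
    have := ht0 n
    linarith
  have hdis : ∀ n m x, b n x ≠ 0 → m ≠ n → b m x = 0 := by
    intro n m x hn hmn
    by_contra hm
    rcases lt_or_gt_of_ne hmn with h | h
    · exact hdis' _ _ x h hm hn
    · exact hdis' _ _ x h hn hm
  let f : X → ℝ := fun x => ∑' n, b n x
  have hf1 : ∀ n x, b n x ≠ 0 → f x = b n x := fun n x hn =>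
    tsum_eq_single n fun m hm => hdis n m x hn hm
  have hf2 : ∀ x, (∀ n, b n x = 0) → f x = 0 := fun x hx => by simp [f, hx]
  have hf0 : ∀ x, 0 ≤ f x := fun x => tsum_nonneg fun n => hb0 n x
  have hfb : ∀ n x, b n x ≤ f x := fun n x => by
    by_cases h : b n x = 0
    · rw [h]; exact hf0 x
    · exact (hf1 n x h).ge
  have hfc : ∀ x, f x = 0 ∨ ∃ n, b n x ≠ 0 ∧ f x = b n x := fun x => by
    by_cases h : ∀ n, b n x = 0
    · exact Or.inl (hf2 x h)
    · push Not at h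
      obtain ⟨n, hn⟩ := h
      exact Or.inr ⟨n, hn, hf1 n x hn⟩
  -- behaviour along lines through the common kernel
  have hline : ∀ x, (∀ j, φ j x = 0) → ∀ h, ∀ᶠ s in 𝓝 (0 : ℝ), f (x + s • h) = 0 := by
    intro x hx h
    have hgood : ∃ N, ∀ n, φ n h ≠ 0 → (∀ j < n, |φ j h| ≤ 1 / 2 * |φ n h|) → n ≤ N := by
      let G : Set ℕ := {n | φ n h ≠ 0 ∧ ∀ j < n, |φ j h| ≤ 1 / 2 * |φ n h|}
      by_cases hG : G.Nonempty
      · have hbdd : BddAbove ((fun n => |φ n h|) '' G) := by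
          refine ⟨‖h‖, ?_⟩
          rintro _ ⟨n, _, rfl⟩
          have := (φ n).le_opNorm h
          rw [Real.norm_eq_abs] at this
          exact this.trans (by nlinarith [hφ n, norm_nonneg h])
        obtain ⟨n0, hn0⟩ := hG
        have hs0 : 0 < sSup ((fun n => |φ n h|) '' G) :=
          (abs_pos.2 hn0.1).trans_le (le_csSup hbdd ⟨n0, hn0, rfl⟩)
        obtain ⟨_, ⟨n, hn, rfl⟩, hlt⟩ := exists_lt_of_lt_csSup
          (Set.Nonempty.image _ ⟨n0, hn0⟩) (half_lt_self hs0)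
        refine ⟨n, fun k hk1 hk2 => ?_⟩
        by_contra hkn
        have h1 := hk2 n (not_le.1 hkn)
        have h2 := le_csSup hbdd ⟨k, ⟨hk1, hk2⟩, rfl⟩
        simp only at h2 hlt
        linarith
      · exact ⟨0, fun n h1 h2 => (hG ⟨n, h1, h2⟩).elim⟩
    obtain ⟨N, hN⟩ := hgood
    have hsm : ∀ᶠ s in 𝓝 (0 : ℝ), |s| * ‖h‖ < 2 / 3 * t N := by
      have hc : Tendsto (fun s : ℝ => |s| * ‖h‖) (𝓝 0) (𝓝 (|0| * ‖h‖)) :=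
        Continuous.tendsto (by fun_prop) 0
      rw [abs_zero, zero_mul] at hc
      exact hc.eventually_lt_const (by have := ht0 N; positivity)
    filter_upwards [hsm] with s hs
    refine hf2 _ fun n => ?_
    by_contra hn
    obtain ⟨h1, h2⟩ := hbs n _ hn
    have he : ∀ j, φ j (x + s • h) = s * φ j h := fun j => by simp [hx j]
    rw [he] at h1
    have hpos : 0 < s * φ n h := by have := ht0 n; linarith
    have hsne : s ≠ 0 := left_ne_zero_of_mul hpos.ne'
    have hsp : 0 < |s| := abs_pos.2 hsne
    have habs : s * φ n h = |s| * |φ n h| := by rw [← abs_mul, abs_of_pos hpos]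
    rw [habs] at h1
    have hnN : n ≤ N := by
      refine hN n (right_ne_zero_of_mul hpos.ne') fun j hj => ?_
      have h3 := h2 j hj
      rw [he, abs_mul] at h3
      refine le_of_mul_le_mul_left ?_ hsp
      linarith
    have h4 := hta n N hnN
    have h5 : |φ n h| ≤ ‖h‖ := by
      have := (φ n).le_opNorm h
      rw [Real.norm_eq_abs] at this
      exact this.trans (by nlinarith [hφ n, norm_nonneg h])
    have h6 := mul_le_mul_of_nonneg_left h5 hsp.le
    linarith
  have hker0 : ∀ x, (∀ j, φ j x = 0) → f x = 0 := by
    intro x hx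
    have := (hline x hx 0).self_of_nhds
    simpa using this
  refine ⟨f, t, ⟨⟨1, fun x => ?_⟩, ⟨K, ?_⟩, fun x => ?_⟩, ht0, htt, ?_, ?_, ?_⟩
  · rw [abs_of_nonneg (hf0 x)]
    rcases hfc x with h | ⟨n, _, h⟩
    · rw [h]; exact zero_le_one
    · rw [h]; exact hb1 n x
  · refine LipschitzWith.of_le_add_mul K fun x y => ?_
    rcases hfc x with h | ⟨n, _, h⟩
    · rw [h]; have := hf0 y; positivity
    · rw [h]
      have := hbK n x y
      have := hfb n y
      linarith
  · by_cases hx : ∀ j, φ j x = 0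
    · refine ⟨0, fun h => ?_⟩
      have h0 := hker0 x hx
      refine Tendsto.congr' ?_ tendsto_const_nhds
      filter_upwards [(hline x hx h).filter_mono nhdsWithin_le_nhds] with s hs
      simp [hs, h0]
    · push Not at hx
      obtain ⟨j, hj⟩ := hx
      apply gateaux_of_differentiableAt
      have hp : 0 < |φ j x| := abs_pos.2 hj
      obtain ⟨N, hN1, hN2⟩ := ((htt.eventually_lt_const hp).and
        (eventually_gt_atTop j)).exists
      have hev : ∀ᶠ y in 𝓝 x, t N < |φ j y| := by
        have hc : Tendsto (fun y => |φ j y|) (𝓝 x) (𝓝 |φ j x|) :=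
          Continuous.tendsto (by fun_prop) x
        exact hc.eventually_const_lt hN1
      have hd : DifferentiableAt ℝ (fun y => ∑ n ∈ Finset.range N, b n y) x :=
        DifferentiableAt.fun_sum fun n _ => hbd n x
      refine hd.congr_of_eventuallyEq ?_
      filter_upwards [hev] with y hy
      refine tsum_eq_sum fun n hn => ?_
      by_contra hne
      have hNn : N ≤ n := by simpa using hn
      have h1 := (hbs n y hne).2 j (hN2.trans_le hNn)
      have h2 := hta N n hNn
      have := ht0 n
      linarith
  · exact hker0 0 fun j => map_zero _
  · intro h
    simpa using hline 0 (fun j => map_zero _) h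
  · intro n x h1 h2
    have h3 := hfb n (t n • x)
    have h4 : b n (t n • x) = t n := by
      simp only [b]
      rw [smul_smul, inv_mul_cancel₀ (ht0 n).ne', one_smul, hBe n x h1 h2, mul_one]
    rwa [h4] at h3

lemma totallyBounded_of_comp (T : Y →L[ℝ] X)
    (H : ∀ f : X → ℝ, MemCbG f → MemCbF (f ∘ T)) :
    TotallyBounded (⇑T '' closedBall 0 1) := by
  by_contra hT
  obtain ⟨C, y, φ, hC, hφ, hy, h1, h2⟩ := noncompact_seq T hT
  obtain ⟨f, t, hf, ht0, htt, hf0, hfl, hfb⟩ := exists_bad_function φ hφ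
  have hd := ((H f hf).2.2 0).hasFDerivAt
  set A := fderiv ℝ (f ∘ T) 0 with hA
  have hA0 : ∀ k, A k = 0 := by
    intro k
    have hl : HasDerivAt (fun s : ℝ => (f ∘ T) (0 + s • k)) (A k) 0 := hd.hasLineDerivAt k
    have hl2 : HasDerivAt (fun s : ℝ => (f ∘ T) (0 + s • k)) 0 0 := by
      refine (hasDerivAt_const (0 : ℝ) (0 : ℝ)).congr_of_eventuallyEq ?_
      filter_upwards [hfl (T k)] with s hs
      simpa using hs
    exact hl.unique hl2
  rw [hasFDerivAt_iff_isLittleO_nhds_zero, Asymptotics.isLittleO_iff] at hd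
  have hev := hd (c := 1 / (2 * C)) (by positivity)
  have hlim : Tendsto (fun n => t n • y n) atTop (𝓝 0) := by
    rw [tendsto_zero_iff_norm_tendsto_zero]
    refine squeeze_zero (fun n => norm_nonneg _) (g := fun n => t n * C) (fun n => ?_) ?_
    · rw [norm_smul, Real.norm_of_nonneg (ht0 n).le]
      exact mul_le_mul_of_nonneg_left (hy n) (ht0 n).le
    · simpa using htt.mul_const C
  obtain ⟨n, hn⟩ := (hlim.eventually hev).exists
  have h3 := hfb n (T (y n)) (h1 n) fun j hj => h2 j n hj
  simp only [hA0, zero_add, Function.comp_apply, map_zero, hf0, sub_zero, map_smul] at hn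
  rw [Real.norm_eq_abs, norm_smul, Real.norm_of_nonneg (ht0 n).le] at hn
  have h4 := (h3.trans (le_abs_self _)).trans hn
  have h5 : 1 / (2 * C) * (t n * ‖y n‖) ≤ 1 / (2 * C) * (t n * C) := by
    have := ht0 n
    have := hy n
    gcongr
  have h6 : 1 / (2 * C) * (t n * C) = t n / 2 := by field_simp
  have := ht0 n
  linarith

lemma denseRange_of_inj (T : Y →L[ℝ] X)
    (H : ∀ f g : X → ℝ, MemCbG f → MemCbG g → f ∘ ⇑T = g ∘ ⇑T → f = g) :
    DenseRange T := by
  by_contra hT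
  obtain ⟨x, hx⟩ : ∃ x, x ∉ closure (Set.range T) := by
    simpa [DenseRange, Dense] using hT
  have hconv : Convex ℝ (closure (Set.range T)) := by
    have := (LinearMap.range T.toLinearMap).convex.closure
    have he : ((LinearMap.range T.toLinearMap : Submodule ℝ X) : Set X) = Set.range T := by
      ext; simp
    rwa [he] at this
  obtain ⟨φ, u, hφ1, hφ2⟩ := geometric_hahn_banach_closed_point hconv isClosed_closure hx
  have hz : ∀ y, φ (T y) = 0 := by
    intro y
    by_contra hne
    have h1 := hφ1 (T ((u / φ (T y)) • y)) (subset_closure ⟨_, rfl⟩)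
    rw [map_smul, map_smul, smul_eq_mul, div_mul_cancel₀ _ hne] at h1
    exact lt_irrefl _ h1
  have hu : 0 < u := by
    have := hφ1 (T 0) (subset_closure ⟨_, rfl⟩)
    simpa using this
  have hφx : φ x ≠ 0 := (hu.trans hφ2).ne'
  have hsl : LipschitzWith 1 Real.sin := by
    refine lipschitzWith_of_nnnorm_deriv_le Real.differentiable_sin fun z => ?_
    rw [Real.deriv_sin, ← NNReal.coe_le_coe]
    simpa using Real.abs_cos_le_one z
  have hm : MemCbG (fun z => Real.sin (φ z)) := by
    refine ⟨⟨1, fun z => Real.abs_sin_le_one _⟩, ⟨1 * ‖φ‖₊, hsl.comp φ.lipschitz⟩, fun z => ?_⟩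
    apply gateaux_of_differentiableAt
    exact (Real.differentiable_sin.comp φ.differentiable) z
  have hm0 : MemCbG (fun _ : X => (0 : ℝ)) :=
    ⟨⟨0, fun z => by simp⟩, ⟨0, LipschitzWith.const 0⟩, fun z =>
      gateaux_of_differentiableAt (differentiableAt_const _)⟩
  have := H _ _ hm hm0 (by ext y; simp [hz])
  have h2 := congrFun this ((Real.pi / 2 / φ x) • x)
  simp only [map_smul, smul_eq_mul, div_mul_cancel₀ _ hφx, Real.sin_pi_div_two] at h2
  exact one_ne_zero h2

end Helpers

/-- Let `X`, `Y` be Banach spaces and `T : Y → X` a bounded linear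
operator. Then `T` is compact with dense range if and only if composition with `T` maps
every bounded Lipschitz everywhere Gâteaux differentiable function on `X` to a bounded
Lipschitz everywhere Fréchet differentiable function on `Y`, and this composition map is
injective on the class of bounded Lipschitz everywhere Gâteaux differentiable functions. -/
theorem compact_denseRange_iff_composition
    {X Y : Type*} [NormedAddCommGroup X] [NormedSpace ℝ X] [CompleteSpace X]
    [NormedAddCommGroup Y] [NormedSpace ℝ Y] [CompleteSpace Y]
    (T : Y →L[ℝ] X) :
    (IsCompact (closure (⇑T '' closedBall 0 1)) ∧ DenseRange T) ↔
      ((∀ f : X → ℝ, MemCbG f → MemCbF (f ∘ T)) ∧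
        (∀ f g : X → ℝ, MemCbG f → MemCbG g → f ∘ ⇑T = g ∘ ⇑T → f = g)) := by
  constructor
  · rintro ⟨hc, hd⟩
    have htb : TotallyBounded (⇑T '' closedBall 0 1) := hc.totallyBounded.subset subset_closure
    refine ⟨fun f hf => ?_, fun f g hf hg hfg => ?_⟩
    · obtain ⟨⟨C, hC⟩, ⟨K, hK⟩, hG⟩ := hf
      exact ⟨⟨C, fun y => hC _⟩, ⟨K * ‖T‖₊, hK.comp T.lipschitz⟩,
        differentiable_comp_of_compact T htb hK hG⟩
    · obtain ⟨_, ⟨K, hK⟩, _⟩ := hf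
      obtain ⟨_, ⟨K', hK'⟩, _⟩ := hg
      exact hd.equalizer hK.continuous hK'.continuous hfg
  · rintro ⟨h1, h2⟩
    exact ⟨(totallyBounded_of_comp T h1).closure.isCompact_of_isClosed
      isClosed_closure, denseRange_of_inj T h2⟩
end

section
/- Let X, Y, E be Banach spaces and T : Y → X a limited bounded linear operator, i.e., for every sequence (pₙ) in the dual X* converging to 0 in the weak-* topology, ‖pₙ ∘ T‖ → 0. Suppose q : X → E is a d.c. mapping with a control function g that is Fréchet differentiable at 0, q(0) = 0, and B_E(0, t) ⊆ (q ∘ T)(B_Y(0, t)) for all t > 0. Then E is finite dimensional. -/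
open Filter Metric Topology

theorem jn_generic {α ι : Type*} [Countable ι] (le : α → α → Prop) (hrefl : ∀ a, le a a)
    (htrans : ∀ a b c, le a b → le b c → le a c)
    (hclosed : ∀ u : ℕ → α, (∀ i j, i ≤ j → le (u j) (u i)) → ∃ w, ∀ n, le w (u n))
    (P : ι → α → Prop) (hdown : ∀ k a b, le a b → P k b → P k a)
    (hdense : ∀ k a, ∃ b, le b a ∧ P k b) (u0 : α) : ∃ w, le w u0 ∧ ∀ k, P k w := by
  classical
  rcases isEmpty_or_nonempty ι with h | h
  · exact ⟨u0, hrefl _, fun k => (h.false k).elim⟩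
  obtain ⟨e, he⟩ := exists_surjective_nat ι
  choose F hF1 hF2 using hdense
  let u : ℕ → α := fun n => Nat.rec u0 (fun n a => F (e n) a) n
  have hs : ∀ n, u (n+1) = F (e n) (u n) := fun n => rfl
  have hmono : ∀ i j, i ≤ j → le (u j) (u i) := by
    intro i j hij
    induction j, hij using Nat.le_induction with
    | base => exact hrefl _
    | succ j _ ih => exact htrans _ _ _ (by rw [hs]; exact hF1 _ _) ih
  obtain ⟨w, hw⟩ := hclosed u hmono
  refine ⟨w, hw 0, fun k => ?_⟩
  obtain ⟨n, rfl⟩ := he k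
  exact hdown _ _ _ (hw (n+1)) (by rw [hs]; exact hF2 _ _)

theorem jn_tree {S C : Type*} (A B : C → Set S) (Good : Set (Set S) → Prop)
    (h0 : Good {Set.univ})
    (step : ∀ D, Good D → ∃ c, Good ((fun s => s ∩ A c) '' D ∪ (fun s => s ∩ B c) '' D))
    (ne : ∀ D, Good D → ∀ s ∈ D, s.Nonempty) :
    ∃ c : ℕ → C, ∀ (σ : ℕ → Bool) (N : ℕ), ∃ s, ∀ i < N, s ∈ cond (σ i) (A (c i)) (B (c i)) := by
  classical
  have : Nonempty C := ⟨(step _ h0).choose⟩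
  choose! F hF using step
  let D : ℕ → Set (Set S) := fun n => Nat.rec {Set.univ}
    (fun _ D => (fun s => s ∩ A (F D)) '' D ∪ (fun s => s ∩ B (F D)) '' D) n
  have hs : ∀ n, D (n+1) = (fun s => s ∩ A (F (D n))) '' D n ∪ (fun s => s ∩ B (F (D n))) '' D n :=
    fun n => rfl
  have hG : ∀ n, Good (D n) := by
    intro n
    induction n with
    | zero => exact h0
    | succ n ih => rw [hs]; exact hF _ ih
  refine ⟨fun n => F (D n), fun σ N => ?_⟩
  have key : ∃ d ∈ D N, ∀ s ∈ d, ∀ i < N, s ∈ cond (σ i) (A (F (D i))) (B (F (D i))) := by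
    induction N with
    | zero => exact ⟨Set.univ, rfl, by simp⟩
    | succ N ih =>
      obtain ⟨d, hd, h⟩ := ih
      cases hσ : σ N with
      | true =>
        refine ⟨d ∩ A (F (D N)), Or.inl ⟨d, hd, rfl⟩, fun s hs i hi => ?_⟩
        rcases Nat.lt_succ_iff_lt_or_eq.1 hi with hi | rfl
        · exact h s hs.1 i hi
        · rw [hσ]; exact hs.2
      | false =>
        refine ⟨d ∩ B (F (D N)), Or.inr ⟨d, hd, rfl⟩, fun s hs i hi => ?_⟩
        rcases Nat.lt_succ_iff_lt_or_eq.1 hi with hi | rfl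
        · exact h s hs.1 i hi
        · rw [hσ]; exact hs.2
  obtain ⟨d, hd, h⟩ := key
  obtain ⟨s, hs⟩ := ne _ (hG N) d hd
  exact ⟨s, h s hs⟩

/-- no point of `D` oscillates along `M` -/
def JNConv {S : Type*} (A B : ℕ → Set S) (D : Set S) (M : Set ℕ) : Prop :=
  ∀ x ∈ D, {n ∈ M | x ∈ A n}.Finite ∨ {n ∈ M | x ∈ B n}.Finite

def JNBad {S : Type*} (A B : ℕ → Set S) (D : Set S) (M : Set ℕ) : Prop :=
  ∀ M' ⊆ M, M'.Infinite → ¬ JNConv A B D M'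

theorem jn_conv_mono {S : Type*} {A B : ℕ → Set S} {D : Set S} {M M' : Set ℕ}
    (h : JNConv A B D M) (hM : (M' \ M).Finite) : JNConv A B D M' := by
  intro x hx
  have key : ∀ Z : ℕ → Set S, {n ∈ M | x ∈ Z n}.Finite → {n ∈ M' | x ∈ Z n}.Finite := by
    intro Z hZ
    refine (hZ.union hM).subset ?_
    rintro n ⟨h1, h2⟩
    by_cases hn : n ∈ M
    · exact Or.inl ⟨hn, h2⟩
    · exact Or.inr ⟨h1, hn⟩
  exact (h x hx).imp (key A) (key B)

theorem jn_split {S : Type*} (A B : ℕ → Set S) (𝒟 : Set (Set S)) (hfin : 𝒟.Finite)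
    (M : Set ℕ) (hM : M.Infinite) (hbad : ∀ D ∈ 𝒟, JNBad A B D M) :
    ∃ n, ∃ M' : Set ℕ, M'.Infinite ∧ ∀ D ∈ 𝒟, JNBad A B (D ∩ A n) M' ∧ JNBad A B (D ∩ B n) M' := by
  classical
  by_contra hcon
  push Not at hcon
  have step : ∀ M' : {M' : Set ℕ // M' ⊆ M ∧ M'.Infinite},
      ∃ (n : ℕ) (M'' : {M' : Set ℕ // M' ⊆ M ∧ M'.Infinite}) (c : 𝒟 × Bool),
        n ∈ M'.1 ∧ M''.1 ⊆ M'.1 ∧ (∀ m ∈ M''.1, n < m) ∧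
        JNConv A B (c.1.1 ∩ cond c.2 (A n) (B n)) M''.1 := by
    rintro ⟨M', h1, h2⟩
    obtain ⟨n, hn⟩ := h2.nonempty
    have h3 : (M' \ Set.Iic n).Infinite := h2.sdiff (Set.finite_Iic n)
    obtain ⟨D, hD, hD2⟩ := hcon n _ h3
    have : ∃ b : Bool, ¬ JNBad A B (D ∩ cond b (A n) (B n)) (M' \ Set.Iic n) := by
      by_cases hb : JNBad A B (D ∩ A n) (M' \ Set.Iic n)
      · exact ⟨false, hD2 hb⟩
      · exact ⟨true, hb⟩
    obtain ⟨b, hb⟩ := this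
    unfold JNBad at hb
    push Not at hb
    obtain ⟨M'', h4, h5, h6⟩ := hb
    refine ⟨n, ⟨M'', (h4.trans Set.sdiff_subset).trans h1, h5⟩, (⟨D, hD⟩, b), hn,
      h4.trans Set.sdiff_subset, fun m hm => ?_, h6⟩
    have := (h4 hm).2
    simpa using this
  choose ν nx col hν hnx hlt hconv using step
  let st : ℕ → {M' : Set ℕ // M' ⊆ M ∧ M'.Infinite} := fun i =>
    Nat.rec ⟨M, subset_rfl, hM⟩ (fun _ a => nx a) i
  have hst : ∀ i, st (i+1) = nx (st i) := fun i => rfl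
  have hanti : ∀ i j, i ≤ j → (st j).1 ⊆ (st i).1 := by
    intro i j hij
    induction j, hij using Nat.le_induction with
    | base => exact subset_rfl
    | succ j _ ih => exact (by rw [hst]; exact hnx _ : (st (j+1)).1 ⊆ (st j).1).trans ih
  have hmem : ∀ i j, i < j → ν (st j) ∈ (st (i+1)).1 := fun i j hij => hanti _ _ hij (hν _)
  have hmono : StrictMono (fun i => ν (st i)) := by
    intro i j hij
    exact hlt (st i) _ (by rw [← hst]; exact hmem i j hij)
  have : Finite 𝒟 := hfin
  obtain ⟨c, hc⟩ := Finite.exists_infinite_fiber (fun i => col (st i))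
  have hI : {i | col (st i) = c}.Infinite := Set.infinite_coe_iff.1 hc
  refine hbad c.1.1 c.1.2 ((fun i => ν (st i)) '' {i | col (st i) = c}) ?_
    (hI.image hmono.injective.injOn) ?_
  · rintro _ ⟨i, -, rfl⟩
    exact (st i).2.1 (hν _)
  · intro x hx
    by_cases h : ∃ i, col (st i) = c ∧ x ∈ cond c.2 (A (ν (st i))) (B (ν (st i)))
    · obtain ⟨i, hi, hxi⟩ := h
      have h1 := hconv (st i)
      rw [hi, ← hst] at h1
      refine jn_conv_mono (D := c.1.1 ∩ cond c.2 (A (ν (st i))) (B (ν (st i)))) h1 ?_ x ⟨hx, hxi⟩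
      refine ((Set.finite_Iic i).image (fun i => ν (st i))).subset ?_
      rintro _ ⟨⟨j, -, rfl⟩, hj⟩
      refine ⟨j, ?_, rfl⟩
      by_contra hji
      exact hj (hmem i j (by simpa using hji))
    · push Not at h
      cases hc2 : c.2 with
      | true =>
        left
        convert Set.finite_empty
        ext n
        simp only [Set.mem_ofPred_eq, Set.mem_empty_iff_false, iff_false]
        rintro ⟨⟨i, hi, rfl⟩, h2⟩
        have := h i hi
        rw [hc2] at this
        exact this h2
      | false =>
        right
        convert Set.finite_empty
        ext n
        simp only [Set.mem_ofPred_eq, Set.mem_empty_iff_false, iff_false]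
        rintro ⟨⟨i, hi, rfl⟩, h2⟩
        have := h i hi
        rw [hc2] at this
        exact this h2

theorem jn_indep {S : Type*} (A B : ℕ → Set S) (M : Set ℕ) (hM : M.Infinite)
    (hbad : JNBad A B Set.univ M) :
    ∃ c : ℕ → ℕ, ∀ (σ : ℕ → Bool) (N : ℕ), ∃ s, ∀ i < N, s ∈ cond (σ i) (A (c i)) (B (c i)) := by
  refine jn_tree A B (fun D => D.Finite ∧ ∃ M : Set ℕ, M.Infinite ∧ ∀ s ∈ D, JNBad A B s M)
    ⟨Set.finite_singleton _, M, hM, by simpa using hbad⟩ ?_ ?_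
  · rintro D ⟨hD, M, hM, h⟩
    obtain ⟨n, M', hM', h'⟩ := jn_split A B D hD M hM h
    refine ⟨n, (hD.image _).union (hD.image _), M', hM', ?_⟩
    rintro _ (⟨s, hs, rfl⟩ | ⟨s, hs, rfl⟩)
    · exact (h' s hs).1
    · exact (h' s hs).2
  · rintro D ⟨hD, M, hM, h⟩ s hs
    by_contra hne
    rw [Set.not_nonempty_iff_eq_empty] at hne
    subst hne
    exact h _ hs M subset_rfl hM (fun x hx => hx.elim)

theorem jn_dichotomy {S : Type*} (f : ℕ → S → ℝ) (C : ℝ) (hC : ∀ n x, |f n x| ≤ C) :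
    (∃ M : Set ℕ, M.Infinite ∧ ∀ x, ∃ l, Tendsto (fun n => f n x) (atTop ⊓ 𝓟 M) (𝓝 l)) ∨
    ∃ r s : ℝ, r < s ∧ ∃ c : ℕ → ℕ, ∀ (σ : ℕ → Bool) (N : ℕ), ∃ x, ∀ i < N,
      cond (σ i) (s < f (c i) x) (f (c i) x < r) := by
  classical
  by_cases hcase : ∃ (r s : ℝ) (M : Set ℕ), r < s ∧ M.Infinite ∧
    JNBad (fun n => {x | s < f n x}) (fun n => {x | f n x < r}) Set.univ M
  · right
    obtain ⟨r, s, M, hrs, hM, hbad⟩ := hcase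
    obtain ⟨c, hc⟩ := jn_indep _ _ M hM hbad
    refine ⟨r, s, hrs, c, fun σ N => ?_⟩
    obtain ⟨x, hx⟩ := hc σ N
    refine ⟨x, fun i hi => ?_⟩
    have := hx i hi
    cases h : σ i <;> simpa [h] using this
  · left
    have hcase' : ∀ (r s : ℝ) (M : Set ℕ), r < s → M.Infinite → ∃ M' ⊆ M, M'.Infinite ∧
      JNConv (fun n => {x | s < f n x}) (fun n => {x | f n x < r}) Set.univ M' := by
      intro r s M hrs hM
      by_contra hh
      exact hcase ⟨r, s, M, hrs, hM, fun M' h1 h2 h3 => hh ⟨M', h1, h2, h3⟩⟩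
    obtain ⟨w, -, hw⟩ := jn_generic (α := {M : Set ℕ // M.Infinite})
      (ι := {p : ℚ × ℚ // p.1 < p.2}) (fun a b => (a.1 \ b.1).Finite) (by simp)
      (by
        rintro ⟨a, _⟩ ⟨b, _⟩ ⟨c, _⟩ h1 h2
        refine (h1.union h2).subset ?_
        rintro x ⟨hx, hx'⟩
        by_cases hb : x ∈ b
        · exact Or.inr ⟨hb, hx'⟩
        · exact Or.inl ⟨hx, hb⟩)
      (by
        intro u hu
        have hinf : ∀ n, (⋂ i ∈ Finset.range (n+1), (u i).1).Infinite := by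
          intro n
          have h1 : (⋃ i ∈ Finset.range (n+1), (u n).1 \ (u i).1).Finite :=
            Set.Finite.biUnion (Finset.finite_toSet _)
              (fun i hi => hu i n (by simpa [Nat.lt_succ_iff] using hi))
          refine ((u n).2.sdiff h1).mono ?_
          rintro x ⟨hx, hx'⟩
          simp only [Set.mem_iUnion, not_exists, Set.mem_sdiff, not_and, not_not] at hx'
          simp only [Set.mem_iInter]
          exact fun i hi => hx' i hi hx
        have hex : ∀ n, ∃ m > n, m ∈ ⋂ i ∈ Finset.range (n+1), (u i).1 := fun n => by
          obtain ⟨m, h1, h2⟩ := (hinf n).exists_gt n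
          exact ⟨m, h2, h1⟩
        choose m hm1 hm2 using hex
        refine ⟨⟨Set.range m, ?_⟩, fun n => ?_⟩
        · rw [Set.infinite_iff_exists_gt]
          exact fun a => ⟨m a, ⟨a, rfl⟩, hm1 a⟩
        · refine ((Set.finite_Iio n).image m).subset ?_
          rintro _ ⟨⟨k, rfl⟩, hk⟩
          refine ⟨k, ?_, rfl⟩
          by_contra hkn
          have := hm2 k
          simp only [Set.mem_iInter] at this
          exact hk (this n (by simp at hkn ⊢; omega)))
      (fun p M => JNConv (fun n => {x | (p.1.2 : ℝ) < f n x}) (fun n => {x | f n x < (p.1.1 : ℝ)})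
        Set.univ M.1)
      (fun k a b hab hb => jn_conv_mono hb hab)
      (by
        rintro ⟨p, hp⟩ ⟨M, hM⟩
        obtain ⟨M', h1, h2, h3⟩ := hcase' p.1 p.2 M (by exact_mod_cast hp) hM
        exact ⟨⟨M', h2⟩, by simp [Set.sdiff_eq_empty.2 h1], h3⟩)
      ⟨Set.univ, Set.infinite_univ⟩
    refine ⟨w.1, w.2, fun x => ?_⟩
    have hfr : ∀ p : ℕ → Prop, (∃ᶠ n in atTop ⊓ 𝓟 w.1, p n) → {n ∈ w.1 | p n}.Infinite := by
      intro p hp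
      rw [frequently_inf_principal, Nat.frequently_atTop_iff_infinite] at hp
      exact hp
    refine tendsto_of_no_upcrossings (s := Set.range ((↑) : ℚ → ℝ)) Rat.denseRange_cast ?_ ?_ ?_
    · rintro _ ⟨a, rfl⟩ _ ⟨b, rfl⟩ hab ⟨h1, h2⟩
      rcases hw ⟨(a, b), by exact_mod_cast hab⟩ x trivial with h | h
      · exact hfr _ h2 h
      · exact hfr _ h1 h
    · exact isBoundedUnder_of ⟨C, fun n => (abs_le.1 (hC n x)).2⟩
    · exact isBoundedUnder_of ⟨-C, fun n => (abs_le.1 (hC n x)).1⟩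

def jnSgn (b : Bool) : ℝ := cond b 1 (-1)

theorem jnSgn_sq (b : Bool) : jnSgn b * jnSgn b = 1 := by cases b <;> simp [jnSgn]
theorem jnSgn_not (b : Bool) : jnSgn (!b) = - jnSgn b := by cases b <;> simp [jnSgn]
theorem jnSgn_abs (b : Bool) : |jnSgn b| = 1 := by cases b <;> simp [jnSgn]

theorem jn_orth {N : ℕ} (n m : Fin N) :
    ∑ σ : Fin N → Bool, jnSgn (σ n) * jnSgn (σ m) = if n = m then 2 ^ N else 0 := by
  classical
  split_ifs with h
  · subst h
    simp [jnSgn_sq]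
  · let e : (Fin N → Bool) ≃ (Fin N → Bool) :=
      Function.Involutive.toPerm (fun σ => Function.update σ n (!(σ n))) (by
        intro σ
        simp)
    have h1 : ∑ σ : Fin N → Bool, jnSgn (σ n) * jnSgn (σ m)
        = ∑ σ : Fin N → Bool, jnSgn (e σ n) * jnSgn (e σ m) :=
      (Equiv.sum_comp e (fun σ => jnSgn (σ n) * jnSgn (σ m))).symm
    have h2 : ∀ σ, jnSgn (e σ n) * jnSgn (e σ m) = - (jnSgn (σ n) * jnSgn (σ m)) := by
      intro σ
      have : e σ = Function.update σ n (!(σ n)) := rfl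
      rw [this, Function.update_self, Function.update_of_ne (Ne.symm h), jnSgn_not]
      ring
    simp only [h2, Finset.sum_neg_distrib] at h1
    linarith

theorem jn_bessel {N : ℕ} (F : (Fin N → Bool) → ℝ) (C : ℝ) (hF : ∀ σ, |F σ| ≤ C) :
    ∑ n : Fin N, ((2 ^ N)⁻¹ * ∑ σ, jnSgn (σ n) * F σ) ^ 2 ≤ C ^ 2 := by
  classical
  set a : Fin N → ℝ := fun n => (2 ^ N)⁻¹ * ∑ σ, jnSgn (σ n) * F σ with ha
  have hK : (0:ℝ) < 2 ^ N := by positivity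
  have ha' : ∀ n, ∑ σ, jnSgn (σ n) * F σ = 2 ^ N * a n := by
    intro n; rw [ha]; field_simp
  have h0 : 0 ≤ ∑ σ : Fin N → Bool, (F σ - ∑ n, a n * jnSgn (σ n)) ^ 2 :=
    Finset.sum_nonneg (fun _ _ => sq_nonneg _)
  have h1 : ∑ σ : Fin N → Bool, F σ * ∑ n, a n * jnSgn (σ n) = 2 ^ N * ∑ n, a n ^ 2 := by
    simp_rw [Finset.mul_sum]
    rw [Finset.sum_comm]
    refine Finset.sum_congr rfl fun n _ => ?_
    calc ∑ σ, F σ * (a n * jnSgn (σ n)) = a n * ∑ σ, jnSgn (σ n) * F σ := by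
          rw [Finset.mul_sum]; exact Finset.sum_congr rfl fun σ _ => by ring
      _ = _ := by rw [ha']; ring
  have h2 : ∑ σ : Fin N → Bool, (∑ n, a n * jnSgn (σ n)) ^ 2 = 2 ^ N * ∑ n, a n ^ 2 := by
    simp_rw [sq, Finset.sum_mul_sum]
    rw [Finset.sum_comm, Finset.mul_sum]
    refine Finset.sum_congr rfl fun n _ => ?_
    rw [Finset.sum_comm]
    calc ∑ m, ∑ σ : Fin N → Bool, a n * jnSgn (σ n) * (a m * jnSgn (σ m))
        = ∑ m, a n * a m * ∑ σ : Fin N → Bool, jnSgn (σ n) * jnSgn (σ m) := by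
          refine Finset.sum_congr rfl fun m _ => ?_
          rw [Finset.mul_sum]; exact Finset.sum_congr rfl fun σ _ => by ring
      _ = _ := by simp [jn_orth]; ring
  have h3 : ∑ σ : Fin N → Bool, F σ ^ 2 ≤ 2 ^ N * C ^ 2 := by
    calc ∑ σ : Fin N → Bool, F σ ^ 2 ≤ ∑ σ : Fin N → Bool, C ^ 2 :=
          Finset.sum_le_sum fun σ _ => sq_le_sq' (abs_le.1 (hF σ)).1 (abs_le.1 (hF σ)).2
      _ = _ := by simp
  have h4 : ∑ σ : Fin N → Bool, (F σ - ∑ n, a n * jnSgn (σ n)) ^ 2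
      = ∑ σ : Fin N → Bool, F σ ^ 2 - 2 * ∑ σ : Fin N → Bool, F σ * ∑ n, a n * jnSgn (σ n)
        + ∑ σ : Fin N → Bool, (∑ n, a n * jnSgn (σ n)) ^ 2 := by
    rw [Finset.mul_sum, ← Finset.sum_sub_distrib, ← Finset.sum_add_distrib]
    exact Finset.sum_congr rfl fun σ _ => by ring
  rw [h4, h1, h2] at h0
  have : 2 ^ N * ∑ n, a n ^ 2 ≤ 2 ^ N * C ^ 2 := by linarith
  exact le_of_mul_le_mul_left this hK

theorem jn_average {X : Type*} [NormedAddCommGroup X] [NormedSpace ℝ X]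
    (x : ℕ → X) (hx : ∀ n, ‖x n‖ ≤ 1) (C d : ℝ) (hd : 0 < d)
    (h : ∀ (σ : ℕ → Bool) (N : ℕ), ∃ φ : X →L[ℝ] ℝ, ‖φ‖ ≤ C ∧
      ∀ i < N, d ≤ jnSgn (σ i) * φ (x i)) :
    ∃ p : ℕ → X →L[ℝ] ℝ, (∀ x, Tendsto (fun n => p n x) atTop (𝓝 0)) ∧ ∃ c > 0, ∀ n, c ≤ ‖p n‖ := by
  classical
  have h' : ∀ (N : ℕ) (σ : Fin N → Bool), ∃ φ : X →L[ℝ] ℝ, ‖φ‖ ≤ C ∧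
      ∀ i : Fin N, d ≤ jnSgn (σ i) * φ (x i) := by
    intro N σ
    obtain ⟨φ, h1, h2⟩ := h (fun i => if hi : i < N then σ ⟨i, hi⟩ else true) N
    refine ⟨φ, h1, fun i => ?_⟩
    have := h2 i i.2
    simpa using this
  choose φ hφ1 hφ2 using h'
  have hC : 0 ≤ C := (norm_nonneg _).trans (hφ1 0 (fun _ => true))
  let p : ℕ → ℕ → X →L[ℝ] ℝ := fun n N => if hn : n < N then
    ((2:ℝ) ^ N)⁻¹ • ∑ σ : Fin N → Bool, jnSgn (σ ⟨n, hn⟩) • φ N σ else 0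
  have hp : ∀ n N (hn : n < N) y, p n N y =
      ((2:ℝ) ^ N)⁻¹ * ∑ σ : Fin N → Bool, jnSgn (σ ⟨n, hn⟩) * φ N σ y := by
    intro n N hn y
    simp [p, hn]
  have hpn : ∀ n N, ‖p n N‖ ≤ C := by
    intro n N
    by_cases hn : n < N
    · simp only [p, hn, dif_pos]
      rw [norm_smul, norm_inv, norm_pow, Real.norm_ofNat, inv_mul_le_iff₀ (by positivity)]
      refine (norm_sum_le _ _).trans ?_
      calc ∑ σ : Fin N → Bool, ‖jnSgn (σ ⟨n, hn⟩) • φ N σ‖ ≤ ∑ σ : Fin N → Bool, C := by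
            refine Finset.sum_le_sum fun σ _ => ?_
            rw [norm_smul, Real.norm_eq_abs, jnSgn_abs, one_mul]
            exact hφ1 _ _
        _ = _ := by simp
    · simp [p, hn, hC]
  have hpb : ∀ K N y, K ≤ N → ∑ n ∈ Finset.range K, (p n N y) ^ 2 ≤ (C * ‖y‖) ^ 2 := by
    intro K N y hKN
    calc ∑ n ∈ Finset.range K, (p n N y) ^ 2 ≤ ∑ n ∈ Finset.range N, (p n N y) ^ 2 :=
          Finset.sum_le_sum_of_subset_of_nonneg (Finset.range_mono hKN) (fun _ _ _ => sq_nonneg _)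
      _ = ∑ n : Fin N, (p n N y) ^ 2 := (Fin.sum_univ_eq_sum_range (fun n => (p n N y)^2) N).symm
      _ = ∑ n : Fin N, (((2:ℝ) ^ N)⁻¹ * ∑ σ : Fin N → Bool, jnSgn (σ n) * φ N σ y) ^ 2 := by
          refine Finset.sum_congr rfl fun n _ => ?_
          rw [hp n N n.2]
      _ ≤ _ := jn_bessel _ _ fun σ => by
          rw [← Real.norm_eq_abs]
          exact (φ N σ).le_of_opNorm_le (hφ1 N σ) y
  have hpx : ∀ n N, n < N → d ≤ p n N (x n) := by
    intro n N hn
    rw [hp n N hn, le_inv_mul_iff₀ (by positivity)]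
    calc 2 ^ N * d = ∑ σ : Fin N → Bool, d := by simp
      _ ≤ _ := Finset.sum_le_sum fun σ _ => hφ2 N σ ⟨n, hn⟩
  let U : Ultrafilter ℕ := Ultrafilter.of atTop
  have hU : (U : Filter ℕ) ≤ atTop := Ultrafilter.of_le atTop
  have hlim : ∀ n, ∃ P : X →L[ℝ] ℝ, ∀ y, Tendsto (fun N => p n N y) U (𝓝 (P y)) := by
    intro n
    have hcomp := WeakDual.isCompact_closedBall (𝕜 := ℝ) (E := X) 0 C
    let q : ℕ → WeakDual ℝ X := fun N => StrongDual.toWeakDual (p n N)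
    obtain ⟨P, -, hP⟩ := hcomp.ultrafilter_le_nhds (U.map q) (by
      rw [le_principal_iff]
      refine Filter.mem_map.2 (Filter.univ_mem' fun N => ?_)
      show p n N ∈ closedBall (0 : StrongDual ℝ X) C
      simpa using hpn n N)
    refine ⟨WeakDual.toStrongDual P, fun y => ?_⟩
    have hP' : Tendsto q U (𝓝 P) := hP
    exact ((WeakDual.eval_continuous y).tendsto P).comp hP'
  choose P hP using hlim
  refine ⟨P, fun y => ?_, d, hd, fun n => ?_⟩
  · have hb : ∀ K, ∑ n ∈ Finset.range K, (P n y) ^ 2 ≤ (C * ‖y‖) ^ 2 := by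
      intro K
      refine le_of_tendsto (tendsto_finsetSum (Finset.range K) fun n _ => (hP n y).pow 2) ?_
      exact hU (Filter.mem_of_superset (Ici_mem_atTop K) fun N hN => hpb K N y hN)
    have hs : Summable (fun n => (P n y) ^ 2) :=
      summable_of_sum_range_le (fun _ => sq_nonneg _) hb
    have := hs.tendsto_atTop_zero
    have h2 := this.sqrt
    simp only [Real.sqrt_sq_eq_abs, Real.sqrt_zero] at h2
    exact (tendsto_zero_iff_abs_tendsto_zero _).2 h2
  · have h1 : d ≤ P n (x n) := by
      refine ge_of_tendsto (hP n (x n)) ?_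
      exact hU (Filter.mem_of_superset (Ioi_mem_atTop n) fun N hN => hpx n N hN)
    calc d ≤ P n (x n) := h1
      _ ≤ ‖P n (x n)‖ := Real.le_norm_self _
      _ ≤ ‖P n‖ * ‖x n‖ := (P n).le_opNorm _
      _ ≤ ‖P n‖ := mul_le_of_le_one_right (norm_nonneg _) (hx n)

def jnN (a : ℕ →₀ ℝ) : ℝ := a.sum fun _ r => |r|

theorem jnN_add {a b : ℕ →₀ ℝ} (h : Disjoint a.support b.support) :
    jnN (a + b) = jnN a + jnN b := Finsupp.sum_add_index_of_disjoint h _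

theorem jnN_smul (r : ℝ) (a : ℕ →₀ ℝ) : jnN (r • a) = |r| * jnN a := by
  unfold jnN
  rw [Finsupp.sum_smul_index' (by simp), Finsupp.mul_sum]
  simp [abs_mul]

/-- normalized sequences of finitely supported vectors, with supports going to infinity -/
def JNSeq : Type := {u : ℕ → (ℕ →₀ ℝ) // (∀ k, jnN (u k) = 1) ∧ ∀ R, ∀ᶠ k in atTop, ∀ n < R, u k n = 0}

/-- `a` is in the absolutely convex hull of the `N`-tail of `u`. -/
def JNHull (u : ℕ → (ℕ →₀ ℝ)) (N : ℕ) (a : ℕ →₀ ℝ) : Prop :=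
  ∀ S : Set (ℕ →₀ ℝ), Convex ℝ S → (∀ b ∈ S, -b ∈ S) → (∀ k ≥ N, u k ∈ S) → a ∈ S

def JNLe (v u : JNSeq) : Prop := ∀ N, ∀ᶠ j in atTop, JNHull u.1 N (v.1 j)

theorem jnLe_refl (u : JNSeq) : JNLe u u := fun N =>
  (eventually_ge_atTop N).mono fun j hj _ _ _ h => h j hj

theorem jnLe_trans (a b c : JNSeq) (h1 : JNLe a b) (h2 : JNLe b c) : JNLe a c := by
  intro N
  obtain ⟨N', hN'⟩ := eventually_atTop.1 (h2 N)
  exact (h1 N').mono fun j hj S hS hS' h => hj S hS hS' fun k hk => hN' k hk S hS hS' h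

theorem jnLe_closed (u : ℕ → JNSeq) (hu : ∀ i j, i ≤ j → JNLe (u j) (u i)) :
    ∃ w, ∀ n, JNLe w (u n) := by
  have : ∀ m, ∃ k, (∀ i ∈ Finset.range (m+1), JNHull (u i).1 m ((u m).1 k)) ∧
      ∀ n < m, (u m).1 k n = 0 := by
    intro m
    have h1 : ∀ᶠ k in atTop, ∀ i ∈ Finset.range (m+1), JNHull (u i).1 m ((u m).1 k) :=
      (Filter.eventually_all_finset _).2 fun i hi => hu i m (by simp at hi; omega) m
    exact (h1.and ((u m).2.2 m)).exists
  choose k hk1 hk2 using this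
  refine ⟨⟨fun m => (u m).1 (k m), fun m => (u m).2.1 _, fun R => ?_⟩, fun n N => ?_⟩
  · exact (eventually_ge_atTop R).mono fun m hm n hn => hk2 m n (by omega)
  · filter_upwards [eventually_ge_atTop n, eventually_ge_atTop N] with m h1 h2
    intro S hS hS' h
    exact hk1 m n (by simp; omega) S hS hS' fun k hk => h k (by omega)

section
variable {X : Type*} [NormedAddCommGroup X] [NormedSpace ℝ X]

/-- eventual strict bound at each point of the unit ball -/
def JNBd (Φ : (ℕ →₀ ℝ) →ₗ[ℝ] (X →L[ℝ] ℝ)) (u : JNSeq) (q : ℝ) : Prop :=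
  ∀ x : X, ‖x‖ ≤ 1 → ∀ᶠ k in atTop, |Φ (u.1 k) x| < q

theorem jnBd_mono (Φ : (ℕ →₀ ℝ) →ₗ[ℝ] (X →L[ℝ] ℝ)) {u v : JNSeq} (h : JNLe v u) {q : ℝ}
    (hu : JNBd Φ u q) : JNBd Φ v q := by
  intro x hx
  obtain ⟨N, hN⟩ := eventually_atTop.1 (hu x hx)
  filter_upwards [h N] with j hj
  refine hj {a | |Φ a x| < q} ?_ (by simp) hN
  intro a ha b hb s t hs ht hst
  simp only [Set.mem_ofPred_eq, map_add, map_smul, _root_.add_apply,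
    _root_.smul_apply, smul_eq_mul] at ha hb ⊢
  rw [abs_lt] at *
  constructor
  · have : s * (-q) + t * (-q) < s * Φ a x + t * Φ b x := by
      rcases hs.eq_or_lt with rfl | hs
      · have : t = 1 := by linarith
        subst this; linarith
      · have := mul_lt_mul_of_pos_left ha.1 hs
        have := mul_le_mul_of_nonneg_left hb.1.le ht
        linarith
    have h2 : s * (-q) + t * (-q) = -q := by rw [← add_mul, hst, one_mul]
    linarith
  · have : s * Φ a x + t * Φ b x < s * q + t * q := by
      rcases hs.eq_or_lt with rfl | hs
      · have : t = 1 := by linarith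
        subst this; linarith
      · have := mul_lt_mul_of_pos_left ha.2 hs
        have := mul_le_mul_of_nonneg_left hb.2.le ht
        linarith
    have h2 : s * q + t * q = q := by rw [← add_mul, hst, one_mul]
    linarith

theorem jn_select (w : JNSeq) {ι : Type*} (M : ι → Set ℕ) (hM : ∀ j, (M j).Infinite)
    (b : ι → Bool) (i : ℕ) (s : Finset ι) :
    ∃ a : ι → ℕ, (∀ j ∈ s, a j ∈ M j ∧ i ≤ a j) ∧
      jnN (∑ j ∈ s, jnSgn (b j) • w.1 (a j)) = s.card := by
  classical
  induction s using Finset.induction_on with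
  | empty => exact ⟨fun _ => 0, by simp, by simp [jnN]⟩
  | insert j s hj ih =>
    obtain ⟨a, ha1, ha2⟩ := ih
    set T := ∑ j ∈ s, jnSgn (b j) • w.1 (a j) with hT
    obtain ⟨R, hR⟩ := T.support.exists_nat_subset_range
    obtain ⟨K, hK⟩ := eventually_atTop.1 (w.2.2 R)
    obtain ⟨k, hkM, hk⟩ := (hM j).exists_gt (max i K)
    have hk1 : i ≤ k := (le_max_left i K).trans hk.le
    have hk2 : K ≤ k := (le_max_right i K).trans hk.le
    have hne : ∀ j' ∈ s, j' ≠ j := fun j' hj' h => hj (h ▸ hj')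
    refine ⟨Function.update a j k, ?_, ?_⟩
    · intro j' hj'
      rcases Finset.mem_insert.1 hj' with rfl | h
      · simp [hkM, hk1]
      · rw [Function.update_of_ne (hne _ h)]; exact ha1 _ h
    · have h1 : ∑ j' ∈ s, jnSgn (b j') • w.1 (Function.update a j k j') = T :=
        Finset.sum_congr rfl fun j' h => by rw [Function.update_of_ne (hne _ h)]
      rw [Finset.sum_insert hj, h1, Function.update_self, jnN_add, jnN_smul, jnSgn_abs, ha2,
        w.2.1, Finset.card_insert_of_notMem hj]
      · push_cast; ring
      · rw [Finset.disjoint_left]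
        intro n hn hn'
        have h2 := Finset.mem_range.1 (hR hn')
        have h3 := hK k hk2 n h2
        simp [h3] at hn

theorem jn_step (Φ : (ℕ →₀ ℝ) →ₗ[ℝ] (X →L[ℝ] ℝ)) (w : JNSeq) (δ : ℝ) (hδ : 0 < δ)
    (h1 : ∀ q > δ, JNBd Φ w q) (h2 : ∀ v, JNLe v w → ∀ q < δ, ¬ JNBd Φ v q)
    {ι : Type*} [Fintype ι] [Nonempty ι] (M : ι → Set ℕ) (hM : ∀ j, (M j).Infinite)
    (b : ι → Bool) :
    ∃ x : X, ‖x‖ ≤ 1 ∧ ∀ j, (M j ∩ {k | δ / 2 ≤ jnSgn (b j) * Φ (w.1 k) x}).Infinite := by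
  classical
  choose a ha1 ha2 using fun i => jn_select w M hM b i Finset.univ
  set m : ℝ := (Fintype.card ι : ℝ) with hm
  have hm0 : 0 < m := by rw [hm]; exact_mod_cast Fintype.card_pos
  have hm1 : 1 ≤ m := by rw [hm]; exact_mod_cast Fintype.card_pos
  let v : JNSeq := ⟨fun i => m⁻¹ • ∑ j, jnSgn (b j) • w.1 (a i j), fun i => by
    rw [jnN_smul, ha2, Finset.card_univ, ← hm, abs_of_pos (by positivity)]
    field_simp, fun R => by
    obtain ⟨K, hK⟩ := eventually_atTop.1 (w.2.2 R)
    filter_upwards [eventually_ge_atTop K] with i hi n hn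
    have : ∀ j, w.1 (a i j) n = 0 := fun j =>
      hK _ (hi.trans (ha1 i j (Finset.mem_univ _)).2) n hn
    simp [this]⟩
  have hv : JNLe v w := by
    intro N
    filter_upwards [eventually_ge_atTop N] with i hi S hS hS' h
    show m⁻¹ • ∑ j, jnSgn (b j) • w.1 (a i j) ∈ S
    rw [Finset.smul_sum]
    refine hS.sum_mem (fun _ _ => by positivity) ?_ fun j _ => ?_
    · simp [← hm, hm0.ne']
    · have := h (a i j) (hi.trans (ha1 i j (Finset.mem_univ _)).2)
      cases b j
      · simpa [jnSgn] using hS' _ this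
      · simpa [jnSgn] using this
  set η : ℝ := δ / (4 * m) with hη
  have hη0 : 0 < η := by positivity
  have hηm : m * η = δ / 4 := by rw [hη]; field_simp
  have hnot := h2 v hv (δ - η) (by linarith)
  unfold JNBd at hnot
  push Not at hnot
  obtain ⟨x0, hx0, hfr⟩ := hnot
  have hfr' : ∃ x : X, ‖x‖ ≤ 1 ∧ ∃ᶠ i in atTop, δ - η ≤ Φ (v.1 i) x := by
    have : ∃ᶠ i in atTop, δ - η ≤ Φ (v.1 i) x0 ∨ δ - η ≤ Φ (v.1 i) (-x0) :=
      hfr.mono fun i hi => by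
        rw [map_neg]; exact le_abs.1 hi
    rcases Filter.frequently_or_distrib.1 this with h | h
    · exact ⟨x0, hx0, h⟩
    · exact ⟨-x0, by simpa using hx0, h⟩
  obtain ⟨x, hx, hf⟩ := hfr'
  refine ⟨x, hx, fun j => ?_⟩
  obtain ⟨K, hK⟩ := eventually_atTop.1 (h1 (δ + η) (by linarith) x hx)
  rw [Set.infinite_iff_exists_gt]
  intro n
  obtain ⟨i, hi, hi2⟩ := (hf.and_eventually (eventually_ge_atTop (max K (n+1)))).exists
  have hiK : K ≤ i := (le_max_left _ _).trans hi2
  have hin : n + 1 ≤ i := (le_max_right _ _).trans hi2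
  have hai : ∀ j, a i j ∈ M j ∧ i ≤ a i j := fun j => ha1 i j (Finset.mem_univ _)
  refine ⟨a i j, ⟨(hai j).1, ?_⟩, by have := (hai j).2; omega⟩
  have hvi : Φ (v.1 i) x = m⁻¹ * ∑ j, jnSgn (b j) * Φ (w.1 (a i j)) x := by
    show Φ (m⁻¹ • ∑ j, jnSgn (b j) • w.1 (a i j)) x = _
    simp [map_sum]
  rw [hvi, le_inv_mul_iff₀ hm0] at hi
  have hle : ∀ j', jnSgn (b j') * Φ (w.1 (a i j')) x ≤ δ + η := by
    intro j'
    have := hK (a i j') (hiK.trans (hai j').2)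
    calc _ ≤ |jnSgn (b j') * Φ (w.1 (a i j')) x| := le_abs_self _
      _ = |Φ (w.1 (a i j')) x| := by rw [abs_mul, jnSgn_abs, one_mul]
      _ ≤ _ := this.le
  rw [← Finset.add_sum_erase _ _ (Finset.mem_univ j)] at hi
  have hsum : ∑ j' ∈ Finset.univ.erase j, jnSgn (b j') * Φ (w.1 (a i j')) x
      ≤ (m - 1) * (δ + η) := by
    refine (Finset.sum_le_card_nsmul _ _ _ fun j' _ => hle j').trans ?_
    rw [Finset.card_erase_of_mem (Finset.mem_univ _), Finset.card_univ, nsmul_eq_mul,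
      Nat.cast_sub Fintype.card_pos]
    simp [hm]
  show δ / 2 ≤ jnSgn (b j) * Φ (w.1 (a i j)) x
  nlinarith

theorem jn_hj (f : ℕ → X →L[ℝ] ℝ) (C c : ℝ) (hC : ∀ n, ‖f n‖ ≤ C) (hc : 0 < c)
    (hlow : ∀ a : ℕ →₀ ℝ, c * jnN a ≤ ‖Finsupp.linearCombination ℝ f a‖) :
    ∃ p : ℕ → X →L[ℝ] ℝ, (∀ x, Tendsto (fun n => p n x) atTop (𝓝 0)) ∧ ∃ c > 0, ∀ n, c ≤ ‖p n‖ := by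
  classical
  set Φ : (ℕ →₀ ℝ) →ₗ[ℝ] (X →L[ℝ] ℝ) := Finsupp.linearCombination ℝ f with hΦ
  have hup : ∀ a, ‖Φ a‖ ≤ C * jnN a := by
    intro a
    rw [hΦ, Finsupp.linearCombination_apply, Finsupp.sum, jnN, Finsupp.sum, Finset.mul_sum]
    refine (norm_sum_le _ _).trans (Finset.sum_le_sum fun i _ => ?_)
    rw [norm_smul, mul_comm, Real.norm_eq_abs]
    exact mul_le_mul_of_nonneg_right (hC i) (abs_nonneg _)
  have hupu : ∀ (u : JNSeq) k, ‖Φ (u.1 k)‖ ≤ C := fun u k => by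
    have := hup (u.1 k); rwa [u.2.1, mul_one] at this
  let u0 : JNSeq := ⟨fun k => Finsupp.single k 1, fun k => by simp [jnN], fun R => by
    filter_upwards [eventually_ge_atTop R] with k hk n hn
    exact Finsupp.single_eq_of_ne (by omega)⟩
  obtain ⟨w, -, hw⟩ := jn_generic (ι := ℚ) JNLe jnLe_refl jnLe_trans jnLe_closed
    (fun q u => JNBd Φ u q ∨ ∀ v, JNLe v u → ¬ JNBd Φ v q)
    (by
      rintro q a b hab (h | h)
      · exact Or.inl (jnBd_mono Φ hab h)
      · exact Or.inr fun v hv => h v (jnLe_trans _ _ _ hv hab))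
    (by
      intro q a
      by_cases h : ∃ v, JNLe v a ∧ JNBd Φ v q
      · obtain ⟨v, h1, h2⟩ := h
        exact ⟨v, h1, Or.inl h2⟩
      · exact ⟨a, jnLe_refl _, Or.inr fun v hv hv' => h ⟨v, hv, hv'⟩⟩) u0
  have hmonoq : ∀ (u : JNSeq) (q q' : ℝ), q ≤ q' → JNBd Φ u q → JNBd Φ u q' :=
    fun u q q' hq h x hx => (h x hx).mono fun k hk => hk.trans_le hq
  have hpos : ∀ q, JNBd Φ w q → 0 < q := by
    intro q h
    obtain ⟨k, hk⟩ := (h 0 (by simp)).exists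
    exact (abs_nonneg _).trans_lt hk
  set Q : Set ℝ := {q | JNBd Φ w q} with hQ
  have hQne : Q.Nonempty := by
    refine ⟨C + 1, fun x hx => Filter.Eventually.of_forall fun k => ?_⟩
    have h1 := (Φ (w.1 k)).le_opNorm x
    rw [Real.norm_eq_abs] at h1
    have h2 := mul_le_of_le_one_right (norm_nonneg (Φ (w.1 k))) hx
    have h3 := hupu w k
    linarith
  have hQbdd : BddBelow Q := ⟨0, fun q hq => (hpos q hq).le⟩
  set δ := sInf Q with hδ
  have hδ0 : 0 ≤ δ := le_csInf hQne fun q hq => (hpos q hq).le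
  have hA : ∀ q > δ, JNBd Φ w q := by
    intro q hq
    obtain ⟨q', h1, h2⟩ := exists_lt_of_csInf_lt hQne hq
    exact hmonoq w q' q h2.le h1
  have hB : ∀ v, JNLe v w → ∀ q < δ, ¬ JNBd Φ v q := by
    intro v hv q hq h
    obtain ⟨r, hr1, hr2⟩ := exists_rat_btwn hq
    rcases hw r with h' | h'
    · exact absurd (csInf_le hQbdd h') (not_le.2 hr2)
    · exact h' v hv (hmonoq v q r hr1.le h)
  rcases hδ0.eq_or_lt with h0 | h0
  · refine ⟨fun k => Φ (w.1 k), fun x => ?_, c, hc, fun k => ?_⟩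
    · rw [Metric.tendsto_atTop']
      intro ε hε
      have hx1 : 0 < ‖x‖ + 1 := by positivity
      have := hA (ε / (‖x‖ + 1)) (by rw [← h0]; positivity) ((‖x‖ + 1)⁻¹ • x) (by
        rw [norm_smul, norm_inv, Real.norm_of_nonneg hx1.le, inv_mul_le_iff₀ hx1]; linarith)
      obtain ⟨N, hN⟩ := eventually_atTop.1 this
      refine ⟨N, fun n hn => ?_⟩
      have h2 := hN n hn.le
      rw [map_smul, smul_eq_mul, abs_mul, abs_of_pos (by positivity), inv_mul_lt_iff₀ hx1,
        mul_div_cancel₀ _ hx1.ne'] at h2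
      simpa using h2
    · have := hlow (w.1 k)
      rwa [w.2.1, mul_one] at this
  · obtain ⟨x, hx⟩ := jn_tree (S := ℕ) (C := {x : X // ‖x‖ ≤ 1})
      (fun x => {k | δ / 2 ≤ jnSgn true * Φ (w.1 k) x.1})
      (fun x => {k | δ / 2 ≤ jnSgn false * Φ (w.1 k) x.1})
      (fun D => D.Finite ∧ D.Nonempty ∧ ∀ s ∈ D, s.Infinite)
      ⟨Set.finite_singleton _, Set.singleton_nonempty _, by simp [Set.infinite_univ]⟩
      (by
        rintro D ⟨hD, hDn, hDi⟩
        have : Fintype D := hD.fintype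
        have : Nonempty D := hDn.to_subtype
        obtain ⟨x, hx, hx2⟩ := jn_step Φ w δ h0 hA hB (ι := D × Bool) (fun j => j.1.1)
          (fun j => hDi _ j.1.2) (fun j => j.2)
        refine ⟨⟨x, hx⟩, (hD.image _).union (hD.image _), (hDn.image _).inl, ?_⟩
        rintro _ (⟨s, hs, rfl⟩ | ⟨s, hs, rfl⟩)
        · exact hx2 (⟨s, hs⟩, true)
        · exact hx2 (⟨s, hs⟩, false))
      (fun D hD s hs => (hD.2.2 s hs).nonempty)
    refine jn_average (fun n => (x n).1) (fun n => (x n).2) C (δ / 2) (by positivity) ?_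
    intro σ N
    obtain ⟨k, hk⟩ := hx σ N
    refine ⟨Φ (w.1 k), hupu w k, fun i hi => ?_⟩
    have := hk i hi
    cases h : σ i <;> simpa [h] using this

theorem josefson_nissenzweig (hX : ¬ FiniteDimensional ℝ X) :
    ∃ p : ℕ → X →L[ℝ] ℝ, (∀ x, Tendsto (fun n => p n x) atTop (𝓝 0)) ∧ ∃ c > 0, ∀ n, c ≤ ‖p n‖ := by
  classical
  have hX' : ¬ FiniteDimensional ℝ (X →L[ℝ] ℝ) := by
    intro h
    apply hX
    have : FiniteDimensional ℝ ((X →L[ℝ] ℝ) →L[ℝ] ℝ) := inferInstance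
    exact FiniteDimensional.of_injective
      (NormedSpace.inclusionInDoubleDualLi (E := X) ℝ).toLinearMap
      (NormedSpace.inclusionInDoubleDualLi (E := X) ℝ).injective
  obtain ⟨R, f, hR, hfR, hsep⟩ := exists_seq_norm_le_one_le_norm_sub hX'
  rcases jn_dichotomy (S := {x : X // ‖x‖ ≤ 1}) (fun n x => f n x.1) R (fun n x => by
    have h1 := (f n).le_opNorm x.1
    have h2 := mul_le_of_le_one_right (norm_nonneg (f n)) x.2
    rw [Real.norm_eq_abs] at h1
    linarith [hfR n]) with ⟨M, hM, hconv⟩ | ⟨r, s, hrs, e, he⟩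
  · have hinf : {n | n ∈ M}.Infinite := hM
    have hmono : StrictMono (Nat.nth (· ∈ M)) := Nat.nth_strictMono hinf
    have ht : Tendsto (Nat.nth (· ∈ M)) atTop (atTop ⊓ 𝓟 M) :=
      tendsto_inf.2 ⟨hmono.tendsto_atTop,
        tendsto_principal.2 (Filter.Eventually.of_forall fun n => Nat.nth_mem_of_infinite hinf n)⟩
    have hconv' : ∀ x : X, ∃ l, Tendsto (fun n => f (Nat.nth (· ∈ M) n) x) atTop (𝓝 l) := by
      intro x
      have hx1 : 0 < ‖x‖ + 1 := by positivity
      obtain ⟨l, hl⟩ := hconv ⟨(‖x‖ + 1)⁻¹ • x, by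
        rw [norm_smul, norm_inv, Real.norm_of_nonneg hx1.le, inv_mul_le_iff₀ hx1]; linarith⟩
      refine ⟨(‖x‖ + 1) * l, ?_⟩
      have := (hl.comp ht).const_mul (‖x‖ + 1)
      refine this.congr fun n => ?_
      simp only [Function.comp, map_smul, smul_eq_mul]
      field_simp
    refine ⟨fun n => f (Nat.nth (· ∈ M) (n+1)) - f (Nat.nth (· ∈ M) n), fun x => ?_, 1, one_pos,
      fun n => hsep (hmono (Nat.lt_succ_self n)).ne'⟩
    obtain ⟨l, hl⟩ := hconv' x
    simpa using ((tendsto_add_atTop_iff_nat 1).2 hl).sub hl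
  · refine jn_hj (fun i => f (e i)) R ((s - r) / 2) (fun i => hfR _) (by linarith) ?_
    intro a
    obtain ⟨N, hN⟩ := a.support.exists_nat_subset_range
    obtain ⟨x, hx⟩ := he (fun i => decide (0 ≤ a i)) N
    obtain ⟨y, hy⟩ := he (fun i => !decide (0 ≤ a i)) N
    have h1 : (s - r) * jnN a ≤ Finsupp.linearCombination ℝ (fun i => f (e i)) a (x.1 - y.1) := by
      rw [Finsupp.linearCombination_apply, Finsupp.sum, _root_.sum_apply, jnN,
        Finsupp.sum, Finset.mul_sum]
      refine Finset.sum_le_sum fun i hi => ?_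
      have hi' := Finset.mem_range.1 (hN hi)
      have hxi := hx i hi'
      have hyi := hy i hi'
      rw [_root_.smul_apply, smul_eq_mul, map_sub]
      by_cases hai : 0 ≤ a i
      · simp [hai] at hxi hyi
        rw [abs_of_nonneg hai]
        nlinarith
      · simp [hai] at hxi hyi
        push Not at hai
        rw [abs_of_neg hai]
        nlinarith
    have h2 := (Finsupp.linearCombination ℝ (fun i => f (e i)) a).le_opNorm (x.1 - y.1)
    have h3 : ‖x.1 - y.1‖ ≤ 2 := (norm_sub_le _ _).trans (by linarith [x.2, y.2])
    have h4 := mul_le_mul_of_nonneg_left h3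
      (norm_nonneg (Finsupp.linearCombination ℝ (fun i => f (e i)) a))
    have h5 := Real.le_norm_self
      (Finsupp.linearCombination ℝ (fun i => f (e i)) a (x.1 - y.1))
    linarith

theorem jn_subgradient (f : X → ℝ) (hf : ConvexOn ℝ Set.univ f) (hc : Continuous f) :
    ∃ p : X →L[ℝ] ℝ, ∀ x, p x ≤ f x - f 0 := by
  have hconv : Convex ℝ {z : X × ℝ | f z.1 < z.2} := by
    simpa using hf.convex_strict_epigraph
  have hopen : IsOpen {z : X × ℝ | f z.1 < z.2} :=
    isOpen_lt (hc.comp continuous_fst) continuous_snd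
  obtain ⟨F, hF⟩ := geometric_hahn_banach_open_point hconv hopen
    (x := ((0 : X), f 0)) (by simp)
  have hdec : ∀ x t, F (x, t) = F (x, 0) + t * F (0, 1) := by
    intro x t
    have : (x, t) = (x, (0:ℝ)) + t • ((0 : X), (1 : ℝ)) := by simp
    rw [this, map_add, map_smul, smul_eq_mul]
  have hk : F (0, 1) < 0 := by
    have := hF (0, f 0 + 1) (by simp)
    rw [hdec, hdec 0 (f 0)] at this
    linarith
  have hz : F ((0 : X), (0:ℝ)) = 0 := map_zero F
  set k := - F (0, 1) with hkdef
  have hk0 : 0 < k := by linarith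
  refine ⟨k⁻¹ • F.comp (ContinuousLinearMap.inl ℝ X ℝ), fun x => ?_⟩
  simp only [_root_.smul_apply, ContinuousLinearMap.comp_apply,
    ContinuousLinearMap.inl_apply, smul_eq_mul]
  rw [inv_mul_le_iff₀ hk0]
  refine le_of_forall_pos_lt_add fun ε hε => ?_
  have := hF (x, f x + ε / k) (by simp; positivity)
  rw [hdec, hdec 0 (f 0), hz] at this
  have h1 : F (0, 1) = -k := by simp [hkdef]
  rw [h1] at this
  have h2 : ε / k * k = ε := by field_simp
  nlinarith
end

/-- **extension of the Bourgain–Diestel theorem.** Let `T : Y → X` be a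
limited bounded linear operator between Banach spaces (every weak-* null sequence in `X*`
composed with `T` tends to `0` in norm). Suppose `q : X → E` is a d.c. mapping with a
control function `g` Fréchet differentiable at `0`, `q 0 = 0`, and
`B_E(0, t) ⊆ (q ∘ T)(B_Y(0, t))` for all `t > 0`. Then `E` is finite dimensional. -/
theorem finiteDimensional_of_limited_dc_cosurjective
    {X Y E : Type*} [NormedAddCommGroup X] [NormedSpace ℝ X] [CompleteSpace X]
    [NormedAddCommGroup Y] [NormedSpace ℝ Y] [CompleteSpace Y]
    [NormedAddCommGroup E] [NormedSpace ℝ E] [CompleteSpace E]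
    (T : Y →L[ℝ] X)
    (hT : ∀ p : ℕ → X →L[ℝ] ℝ, (∀ x : X, Tendsto (fun n => p n x) atTop (𝓝 0)) →
      Tendsto (fun n => ‖(p n).comp T‖) atTop (𝓝 0))
    (q : X → E) (g : X → ℝ)
    (hg_convex : ConvexOn ℝ Set.univ g) (hg_cont : Continuous g)
    (hdc : ∀ e : E →L[ℝ] ℝ, ConvexOn ℝ Set.univ (fun x => e (q x) + g x) ∧
      Continuous fun x => e (q x) + g x)
    (hg_frechet : DifferentiableAt ℝ g 0)
    (hq0 : q 0 = 0)
    (hsurj : ∀ t : ℝ, 0 < t → ball (0 : E) t ⊆ (fun y => q (T y)) '' ball (0 : Y) t) :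
    FiniteDimensional ℝ E := by
  classical
  by_contra hE
  obtain ⟨e, he, c, hc, hec⟩ := josefson_nissenzweig hE
  choose P hP using fun n => jn_subgradient _ (hdc (e n)).1 (hdc (e n)).2
  have hP' : ∀ n x, P n x ≤ e n (q x) + g x - g 0 := by
    intro n x
    have := hP n x
    rw [hq0, map_zero] at this
    linarith
  set L := fderiv ℝ g 0 with hL
  have hlo : ∀ η > 0, ∃ r > 0, ∀ z : X, ‖z‖ < r → |g z - g 0 - L z| ≤ η * ‖z‖ := by
    intro η hη
    have h1 := hg_frechet.hasFDerivAt.isLittleO.def hη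
    obtain ⟨r, hr, h2⟩ := Metric.eventually_nhds_iff.1 h1
    refine ⟨r, hr, fun z hz => ?_⟩
    have := h2 (by simpa using hz : dist z 0 < r)
    simpa using this
  have hupper : ∀ x : X, ∀ ε > 0, ∀ᶠ n in atTop, P n x - L x < ε := by
    intro x ε hε
    have hx1 : 0 < ‖x‖ + 1 := by positivity
    obtain ⟨r, hr, h⟩ := hlo (ε / 2 / (‖x‖ + 1)) (by positivity)
    set s := r / (‖x‖ + 1) with hs
    have hs0 : 0 < s := by positivity
    have hn : ‖s • x‖ = s * ‖x‖ := by rw [norm_smul, Real.norm_of_nonneg hs0.le]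
    have hsr : s * (‖x‖ + 1) = r := by rw [hs]; field_simp
    have h1 := h (s • x) (by rw [hn]; linarith)
    have h2 : ε / 2 / (‖x‖ + 1) * ‖s • x‖ ≤ s * (ε / 2) := by
      rw [hn, div_mul_eq_mul_div, div_le_iff₀ hx1]
      have : 0 < s * (ε / 2) := by positivity
      nlinarith
    have h3 := (abs_le.1 h1).2
    rw [map_smul, smul_eq_mul] at h3
    have h4 : ∀ᶠ n in atTop, e n (q (s • x)) < s * (ε / 2) :=
      (he (q (s • x))).eventually_lt_const (by positivity)
    filter_upwards [h4] with n hn4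
    have h5 := hP' n (s • x)
    rw [map_smul, smul_eq_mul] at h5
    have h6 : s * (P n x - L x) < s * ε := by linarith
    exact lt_of_mul_lt_mul_left h6 hs0.le
  have hweak : ∀ x : X, Tendsto (fun n => (P n - L) x) atTop (𝓝 0) := by
    intro x
    rw [Metric.tendsto_nhds]
    intro ε hε
    filter_upwards [hupper x ε hε, hupper (-x) ε hε] with n h1 h2
    rw [map_neg, map_neg] at h2
    rw [dist_zero_right, Real.norm_eq_abs, abs_lt, sub_apply]
    constructor <;> linarith
  have hlim := hT (fun n => P n - L) hweak
  have hT1 : 0 < ‖T‖ + 1 := by positivity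
  obtain ⟨r, hr, h⟩ := hlo (c / 8 / (‖T‖ + 1)) (by positivity)
  set t := r / (‖T‖ + 1) with ht
  have ht0 : 0 < t := by positivity
  have htr : (‖T‖ + 1) * t = r := by rw [ht]; field_simp
  obtain ⟨n, hn⟩ := (hlim.eventually_lt_const (by positivity : 0 < c / 8)).exists
  have hlow : ∀ v ∈ ball (0 : E) t, -(c * t / 4) ≤ e n v := by
    intro v hv
    obtain ⟨y, hy, rfl⟩ := hsurj t ht0 hv
    have hy' : ‖y‖ < t := by simpa using hy
    have hTy : ‖T y‖ ≤ (‖T‖ + 1) * ‖y‖ := by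
      have := T.le_opNorm y
      nlinarith [norm_nonneg y]
    have hTt : ‖T y‖ < (‖T‖ + 1) * t := hTy.trans_lt (mul_lt_mul_of_pos_left hy' hT1)
    have h1 := (abs_le.1 (h (T y) (by linarith))).2
    have h2 : c / 8 / (‖T‖ + 1) * ‖T y‖ ≤ c / 8 * t := by
      rw [div_mul_eq_mul_div, div_le_iff₀ hT1]
      have := mul_le_mul_of_nonneg_left hTt.le (by positivity : 0 ≤ c / 8)
      linarith
    have h3 := hP' n (T y)
    have h4 := ((P n - L).comp T).le_opNorm y
    have h5 : ‖(P n - L).comp T‖ * ‖y‖ ≤ c / 8 * t :=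
      mul_le_mul hn.le hy'.le (norm_nonneg _) (by positivity)
    have h6 := (abs_le.1 ((Real.norm_eq_abs _).symm.le.trans (h4.trans h5))).1
    rw [ContinuousLinearMap.comp_apply, sub_apply] at h6
    show -(c * t / 4) ≤ e n (q (T y))
    linarith
  have hnorm : ‖e n‖ ≤ c / 2 := by
    refine (e n).opNorm_le_bound (by positivity) fun x => ?_
    rcases eq_or_ne x 0 with rfl | hx
    · simp
    have hx0 : 0 < ‖x‖ := norm_pos_iff.2 hx
    set s := t / 2 / ‖x‖ with hs
    have hs0 : 0 < s := by positivity
    have hsx : s * ‖x‖ = t / 2 := by rw [hs]; field_simp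
    have hm : ‖s • x‖ < t := by
      rw [norm_smul, Real.norm_of_nonneg hs0.le, hsx]; linarith
    have h1 := hlow (s • x) (by simpa using hm)
    have h2 := hlow (-(s • x)) (by simpa using hm)
    rw [map_neg] at h2
    rw [map_smul, smul_eq_mul] at h1 h2
    have h3 : s * |e n x| ≤ s * (c / 2 * ‖x‖) := by
      have h4 : s * (c / 2 * ‖x‖) = c * t / 4 := by
        calc s * (c / 2 * ‖x‖) = c / 2 * (s * ‖x‖) := by ring
          _ = _ := by rw [hsx]; ring
      rw [h4, ← abs_of_pos hs0, ← abs_mul, abs_le]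
      constructor <;> linarith
    rw [Real.norm_eq_abs]
    exact le_of_mul_le_mul_left h3 hs0
  have := hec n
  linarith
end
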